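/- arXiv:1312.4521 — 10 statements merged into one kernel-verified Lean document; each statement's English description precedes it below -/
import Mathlib

section
/- Let N, K be positive integers with K ≥ N, let M = lcm(K,N), P = gcd(N,K), J = N/P, L = K/P, and let v : ℤ → ℂ be finitely supported. Define the K×N polyphase multiplexer matrix of Laurent polynomials by [M(z)]_{l,k} = ∑_{n∈ℤ} v[l+nK]·exp(2πi k(l+nK)/N)·z^{−n} for 0 ≤ l ≤ K−1, 0 ≤ k ≤ N−1. Then M(z) = V(z)·F_N, where F_N is the N×N matrix [F_N]_{m,k} = exp(2πi mk/N), and V(z) is the K×N matrix whose entry at position (iP+r, jP+r), for i ∈ {0,…,L−1}, j ∈ {0,…,J−1}, r ∈ {0,…,P−1}, equals z^{−p}·V_{pK+iP+r}(z^J) where p = p(i,j), and all entries at positions (l,m) with l ≢ m (mod P) are zero. -/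
open Complex

/-!
Write `N = P * J` and `K = P * L` with `J`, `L` coprime. The `(l, m)` entry of `V(z)` contributes to
`z^(-n)` exactly when `m ≡ l + n * K [ZMOD N]`: this congruence splits into `m ≡ l` modulo `P` and
`L * (n - p) ≡ 0` modulo `J`. When it holds, the coefficient is `v (l + n * K)`, because
`lcm K N = J * K`. So for each `n` a single `m` survives, and the exponentials at `m` and at
`l + n * K` agree by `N`-periodicity.
-/

section PolyphaseFactor

variable {R : Type*}

/-- The polyphase component `V_j(z)` of `v` with respect to `M`, as its coefficient function: `n` is
sent to the coefficient of `z^(-n)`. -/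
def polyphaseComponent (M : ℤ) (v : ℤ → R) (j n : ℤ) : R :=
  v (j + n * M)

variable [Zero R]

/-- The series `z^(-p) * c(z^J)`, where series are encoded by their coefficients of `z^(-n)`. -/
def delayedUpsample (J p : ℤ) (c : ℤ → R) (n : ℤ) : R :=
  if J ∣ n - p then c ((n - p) / J) else 0

/-- The coefficient of `z^(-n)` in the `(l, m)` entry of the matrix `V(z)` that multiplies the DFT
matrix. The row `l = i * P + r` is encoded by `i = l / P` and `r = l % P`, and the column `m`
likewise. -/
def polyphaseFactor (K P J M : ℤ) (p : ℤ → ℤ → ℤ) (v : ℤ → R) (l m n : ℤ) : R :=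
  if l % P = m % P then
    delayedUpsample J (p (l / P) (m / P)) (polyphaseComponent M v (p (l / P) (m / P) * K + l)) n
  else 0

lemma delayedUpsample_polyphaseComponent (J K p l : ℤ) (v : ℤ → R) (n : ℤ) :
    delayedUpsample J p (polyphaseComponent (J * K) v (p * K + l)) n =
      if J ∣ n - p then v (l + n * K) else 0 := by
  refine ite_congr rfl (fun hdvd ↦ congrArg v ?_) fun _ ↦ rfl
  linear_combination K * Int.ediv_mul_cancel hdvd

lemma emod_eq_and_dvd_sub_iff_modEq {P J L l m n p : ℤ} (hP : P ≠ 0) (hJL : IsCoprime J L)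
    (hp : m / P ≡ p * L + l / P [ZMOD J]) :
    l % P = m % P ∧ J ∣ n - p ↔ m ≡ l + n * (P * L) [ZMOD P * J] := by
  have hl := Int.emod_add_mul_ediv l P
  have hm := Int.emod_add_mul_ediv m P
  obtain ⟨c, hc⟩ := hp.dvd
  rw [Int.modEq_iff_dvd]
  constructor
  · rintro ⟨hmod, d, hd⟩
    exact ⟨d * L + c, by linear_combination hmod - hl + hm + P * L * hd + P * hc⟩
  · rintro ⟨d, hd⟩
    have hmod : l % P = m % P :=
      (Int.modEq_of_dvd ⟨J * d - n * L, by linear_combination hd⟩ : m ≡ l [ZMOD P]).symm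
    have hdvd : J ∣ (n - p) * L :=
      ⟨d - c, mul_left_cancel₀ hP (by linear_combination hd - hmod + hl - hm - P * hc)⟩
    exact ⟨hmod, hJL.dvd_of_dvd_mul_right hdvd⟩

lemma polyphaseFactor_eq_ite_modEq {P J L l m : ℤ} {p : ℤ → ℤ → ℤ} (hP : P ≠ 0)
    (hJL : IsCoprime J L) (hp : m / P ≡ p (l / P) (m / P) * L + l / P [ZMOD J])
    (v : ℤ → R) (n : ℤ) :
    polyphaseFactor (P * L) P J (J * (P * L)) p v l m n =
      if m ≡ l + n * (P * L) [ZMOD P * J] then v (l + n * (P * L)) else 0 := by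
  simp only [polyphaseFactor, delayedUpsample_polyphaseComponent, ← ite_and,
    emod_eq_and_dvd_sub_iff_modEq hP hJL hp]

end PolyphaseFactor

lemma sum_fin_ite_modEq_of_periodic {A : Type*} [AddCommMonoid A] {N : ℕ} (hN : 0 < N)
    {g : ℤ → A} (hg : Function.Periodic g N) (a : ℤ) :
    ∑ m : Fin N, (if (m : ℤ) ≡ a [ZMOD N] then g m else 0) = g a := by
  have hN' : (0 : ℤ) < N := by exact_mod_cast hN
  obtain ⟨r, hr⟩ := Int.eq_ofNat_of_zero_le (Int.emod_nonneg a hN'.ne')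
  have hrN : r < N := by exact_mod_cast hr ▸ Int.emod_lt_of_pos a hN'
  have hmod (m : Fin N) : (m : ℤ) ≡ a [ZMOD N] ↔ m = ⟨r, hrN⟩ := by
    rw [Int.ModEq, hr, Int.emod_eq_of_lt (by positivity) (by exact_mod_cast m.isLt), Fin.ext_iff]
    exact Nat.cast_inj
  have hga : g r = g a := by
    rw [← hr, Int.emod_def, mul_comm]
    exact hg.sub_int_mul_eq (a / N)
  simp only [hmod, Finset.sum_ite_eq', Finset.mem_univ, if_true, hga]

lemma periodic_exp_two_pi_I_mul_div {N : ℕ} (hN : N ≠ 0) (k : ℤ) :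
    Function.Periodic (fun a : ℤ ↦ exp (2 * Real.pi * I * k * a / N)) N := by
  intro a
  have hN' : (N : ℂ) ≠ 0 := Nat.cast_ne_zero.mpr hN
  refine exp_eq_exp_iff_exists_int.mpr ⟨k, ?_⟩
  push_cast
  field_simp

theorem stmt0_general {R : Type*} [NonUnitalNonAssocSemiring R]
    (N K P J L M : ℕ) (hN : 0 < N)
    (hP : P = Nat.gcd N K) (hJ : J = N / P) (hL : L = K / P) (hM : M = Nat.lcm K N)
    (v e : ℤ → R) (he : Function.Periodic e N)
    (p : ℤ → ℤ → ℤ) (hp : ∀ i j : ℤ, j ≡ p i j * (L : ℤ) + i [ZMOD (J : ℤ)]) (l n : ℤ) :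
    v (l + n * K) * e (l + n * K) = ∑ m : Fin N, polyphaseFactor K P J M p v l m n * e m := by
  have hPpos : 0 < P := hP ▸ Nat.gcd_pos_of_pos_left K hN
  have hNPJ : N = P * J := by rw [hJ, Nat.mul_div_cancel' (hP ▸ Nat.gcd_dvd_left N K)]
  have hKPL : K = P * L := by rw [hL, Nat.mul_div_cancel' (hP ▸ Nat.gcd_dvd_right N K)]
  have hJL : IsCoprime (J : ℤ) L := by
    rw [Nat.isCoprime_iff_coprime, hJ, hL, hP]
    exact Nat.coprime_div_gcd_div_gcd (hP ▸ hPpos)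
  have hMJK : M = J * K := by
    rw [hM, hJ, hP, Nat.lcm_comm, Nat.lcm_eq_mul_div,
      Nat.div_mul_right_comm (Nat.gcd_dvd_left N K)]
  have hfactor (m : ℤ) : polyphaseFactor K P J M p v l m n =
      if m ≡ l + n * K [ZMOD N] then v (l + n * K) else 0 := by
    rw [hMJK, hNPJ, hKPL]
    push_cast
    exact polyphaseFactor_eq_ite_modEq (by exact_mod_cast hPpos.ne') hJL (hp _ _) v n
  simp only [hfactor, ite_mul, zero_mul]
  exact (sum_fin_ite_modEq_of_periodic hN (he.comp (v (l + n * K) * ·)) (l + n * K)).symm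

/-- Polyphase representation of the OFDM multiplexer:
`M(z) = V(z) · F_N`, stated coefficientwise.  A Laurent polynomial
`∑ c n · z^(-n)` is represented by its coefficient function `n ↦ c n`.
The `(l,k)` entry of the multiplexer polyphase matrix `M(z)` has coefficient
`v (l + nK) · exp(2πi k (l+nK)/N)` at `z^(-n)`; the matrix `V(z)` has entry
`z^(-p) V_{pK+iP+r}(z^J)` at position `(iP+r, jP+r)` (with `p = p(i,j)`)
and zero entries elsewhere, and `F_N` is the `N`-point DFT matrix. -/
theorem stmt0
    (N K P J L M : ℕ) (hN : 0 < N) (hNK : N ≤ K)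
    (hP : P = Nat.gcd N K) (hJ : J = N / P) (hL : L = K / P) (hM : M = Nat.lcm K N)
    (v : ℤ → ℂ) (hv : (Function.support v).Finite)
    (p : ℤ → ℤ → ℤ)
    (hp : ∀ i j : ℤ, 0 ≤ p i j ∧ p i j < (J : ℤ) ∧ j ≡ p i j * (L : ℤ) + i [ZMOD (J : ℤ)]) :
    ∀ (l : Fin K) (k : Fin N) (n : ℤ),
      -- coefficient of `z^(-n)` in `[M(z)]_{l,k}`
      v ((l : ℤ) + n * K) *
          Complex.exp (2 * Real.pi * Complex.I * ((k : ℕ) : ℂ) * (((l : ℤ) + n * K : ℤ) : ℂ) / N)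
        =
      -- coefficient of `z^(-n)` in `[V(z) · F_N]_{l,k}`
      ∑ m : Fin N,
        (if ((l : ℤ) % P = (m : ℤ) % P) then
            (if (J : ℤ) ∣ (n - p ((l : ℤ) / P) ((m : ℤ) / P)) then
              v (p ((l : ℤ) / P) ((m : ℤ) / P) * K + (l : ℤ)
                  + ((n - p ((l : ℤ) / P) ((m : ℤ) / P)) / J) * M)
            else 0)
          else 0)
        * Complex.exp (2 * Real.pi * Complex.I * ((m : ℕ) : ℂ) * ((k : ℕ) : ℂ) / N) := by
  intro l k n
  have hperiodic := periodic_exp_two_pi_I_mul_div hN.ne' k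
  simpa only [polyphaseFactor, delayedUpsample, polyphaseComponent, Int.cast_natCast,
    mul_right_comm _ (k : ℂ)]
    using stmt0_general N K P J L M hN hP hJ hL hM v _ hperiodic p (fun i j ↦ (hp i j).2.2) l n
end

section
/- Let N, K be positive integers, P = gcd(N,K), J = N/P. For integers l ∈ {0,…,K−1} and m ∈ {0,…,N−1}, there exist an integer q and an integer p with 0 ≤ p ≤ J−1 such that qN + m = pK + l if and only if m ≡ l (mod P). -/
/-! By Bézout, `q * N + m = p * K + l` is solvable in integers exactly when `gcd N K ∣ l - m`.
Since `N ∣ J * K` for `J = |N| / gcd N K`, replacing `p` by `p + J` can be compensated by changing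
`q`, so solvability of the equation in `q` is a `J`-periodic property of `p`, and `p` can be moved
into `[0, J)`. -/

section CommRing

variable {R : Type*} [CommRing R]

theorem gcd_dvd_sub_iff_exists_mul_add_eq [IsDomain R] [IsBezout R] [GCDMonoid R] (a b m l : R) :
    gcd a b ∣ l - m ↔ ∃ p q : R, q * a + m = p * b + l := by
  rw [gcd_dvd_iff_exists]
  constructor
  · rintro ⟨x, y, hxy⟩
    exact ⟨-y, x, by linear_combination -hxy⟩
  · rintro ⟨p, q, hpq⟩
    exact ⟨q, -p, by linear_combination -hpq⟩

theorem periodic_exists_mul_add_eq {a b c : R} (h : a ∣ c * b) (m l : R) :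
    Function.Periodic (fun p ↦ ∃ q, q * a + m = p * b + l) c := by
  obtain ⟨k, hk⟩ := h
  intro p
  refine propext ⟨?_, ?_⟩
  · rintro ⟨q, hq⟩
    exact ⟨q - k, by linear_combination hq + hk⟩
  · rintro ⟨q, hq⟩
    exact ⟨q + k, by linear_combination hq - hk⟩

end CommRing

theorem exists_mem_Ico_iff_of_periodic {α : Type*} [AddCommGroup α] [LinearOrder α]
    [IsOrderedAddMonoid α] [Archimedean α] {f : α → Prop} {c : α} (hf : Function.Periodic f c)
    (hc : 0 < c) : (∃ x ∈ Set.Ico 0 c, f x) ↔ ∃ x, f x := by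
  constructor
  · rintro ⟨x, -, hx⟩
    exact ⟨x, hx⟩
  · rintro ⟨x, hx⟩
    obtain ⟨y, hy, hxy⟩ := hf.exists_mem_Ico₀ hc x
    exact ⟨y, hy, hxy.mp hx⟩

theorem dvd_abs_ediv_gcd_mul (a b : ℤ) : a ∣ |a| / (a.gcd b : ℤ) * b := by
  have gcd_dvd_abs : (a.gcd b : ℤ) ∣ |a| := (dvd_abs _ _).mpr (Int.gcd_dvd_left a b)
  calc
    a ∣ |a| := self_dvd_abs a
    _ = |a| / (a.gcd b : ℤ) * a.gcd b := (Int.ediv_mul_cancel gcd_dvd_abs).symm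
    _ ∣ |a| / (a.gcd b : ℤ) * b := mul_dvd_mul_left _ (Int.gcd_dvd_right a b)

theorem abs_ediv_gcd_pos {a : ℤ} (ha : a ≠ 0) (b : ℤ) : 0 < |a| / (a.gcd b : ℤ) :=
  Int.ediv_pos_of_pos_of_dvd (abs_pos.mpr ha) (Int.natCast_nonneg _)
    ((dvd_abs _ _).mpr (Int.gcd_dvd_left a b))

theorem stmt2_general {N : ℤ} (hN : N ≠ 0) (K l m : ℤ) :
    (∃ q p : ℤ, 0 ≤ p ∧ p ≤ |N| / (N.gcd K : ℤ) - 1 ∧ q * N + m = p * K + l) ↔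
      m ≡ l [ZMOD (N.gcd K : ℤ)] := by
  have solvable_periodic := periodic_exists_mul_add_eq (dvd_abs_ediv_gcd_mul N K) m l
  calc
    _ ↔ ∃ p ∈ Set.Ico 0 (|N| / (N.gcd K : ℤ)), ∃ q, q * N + m = p * K + l := by
      rw [exists_comm]
      simp only [Set.mem_Ico, Int.le_sub_one_iff, exists_and_left, and_assoc]
    _ ↔ ∃ p q, q * N + m = p * K + l :=
      exists_mem_Ico_iff_of_periodic solvable_periodic (abs_ediv_gcd_pos hN K)
    _ ↔ (N.gcd K : ℤ) ∣ l - m := by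
      rw [Int.coe_gcd, gcd_dvd_sub_iff_exists_mul_add_eq]
    _ ↔ m ≡ l [ZMOD (N.gcd K : ℤ)] := Int.modEq_iff_dvd.symm

/-- For positive integers `N, K` with `P = gcd(N,K)` and `J = N/P`,
and integers `l ∈ {0,…,K−1}`, `m ∈ {0,…,N−1}`: there exist an integer `q` and an
integer `p` with `0 ≤ p ≤ J−1` such that `qN + m = pK + l` if and only if
`m ≡ l (mod P)`. -/
theorem stmt2
    (N K P J : ℕ) (hN : 0 < N) (hK : 0 < K)
    (hP : P = Nat.gcd N K) (hJ : J = N / P)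
    (l m : ℤ) (hl0 : 0 ≤ l) (hlK : l ≤ (K : ℤ) - 1) (hm0 : 0 ≤ m) (hmN : m ≤ (N : ℤ) - 1) :
    (∃ q p : ℤ, 0 ≤ p ∧ p ≤ (J : ℤ) - 1 ∧ q * N + m = p * K + l) ↔
      m ≡ l [ZMOD (P : ℤ)] := by
  subst hP hJ
  simpa using stmt2_general (Int.natCast_ne_zero.mpr hN.ne') K l m
end

section
/- Let J, L be positive integers with gcd(J,L) = 1, and for integers i, j let p(i,j) denote the unique integer in {0,…,J−1} with j ≡ p(i,j)·L + i (mod J). Then for all i ∈ {0,…,L−1} and j ∈ {0,…,J−1}, the quantity p(i,0) + p(0,j) − p(i,j) is a multiple of J and belongs to {0, J}. -/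
/-!
Modulo `J`, the residue `p i j` is `(j - i) / L`, which is additive in the pair `(i, j)`; hence
`p i j + p i' j' - p (i + i') (j + j')` is divisible by `J`. The bounds `0 ≤ p ≤ J - 1` place it
strictly between `-J` and `2 * J`, where the only multiples of `J` are `0` and `J`. The theorem
is the case `(i, j) = (i, 0) + (0, j)`.
-/

theorem modEq_of_isCoprime_of_mul_right_modEq {n a x y : ℤ} (hna : IsCoprime n a)
    (h : x * a ≡ y * a [ZMOD n]) : x ≡ y [ZMOD n] := by
  have hdvd : n ∣ (y - x) * a := by simpa only [sub_mul] using h.dvd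
  exact Int.modEq_of_dvd (hna.dvd_of_dvd_mul_right hdvd)

theorem modEq_add_of_modEq_mul_add {n a i i' j j' x x' y : ℤ} (hna : IsCoprime n a)
    (hx : j ≡ x * a + i [ZMOD n]) (hx' : j' ≡ x' * a + i' [ZMOD n])
    (hy : j + j' ≡ y * a + (i + i') [ZMOD n]) : y ≡ x + x' [ZMOD n] := by
  have hsum : j + j' ≡ (x + x') * a + (i + i') [ZMOD n] := by
    simpa only [add_mul, add_add_add_comm] using hx.add hx'
  exact modEq_of_isCoprime_of_mul_right_modEq hna
    ((hy.symm.trans hsum).add_right_cancel' (i + i'))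

theorem eq_zero_or_eq_of_dvd_of_neg_lt_of_lt_two_mul {n x : ℤ} (hdvd : n ∣ x)
    (hlower : -n < x) (hupper : x < 2 * n) : x = 0 ∨ x = n := by
  rcases lt_or_ge x n with hlt | hge
  · exact .inl (Int.eq_zero_of_abs_lt_dvd hdvd (abs_lt.mpr ⟨hlower, hlt⟩))
  · have habs : |x - n| < n := abs_lt.mpr ⟨by linarith, by linarith⟩
    exact .inr (sub_eq_zero.mp (Int.eq_zero_of_abs_lt_dvd (dvd_sub_self_right.mpr hdvd) habs))

theorem stmt4_general {J L : ℤ} (hcop : IsCoprime J L) {p : ℤ → ℤ → ℤ}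
    (hp : ∀ i j : ℤ, 0 ≤ p i j ∧ p i j ≤ J - 1 ∧ j ≡ p i j * L + i [ZMOD J]) (i j i' j' : ℤ) :
    J ∣ p i j + p i' j' - p (i + i') (j + j') ∧
      (p i j + p i' j' - p (i + i') (j + j') = 0 ∨
        p i j + p i' j' - p (i + i') (j + j') = J) := by
  obtain ⟨hnonneg, hle, hmod⟩ := hp i j
  obtain ⟨hnonneg', hle', hmod'⟩ := hp i' j'
  obtain ⟨hnonneg_add, hle_add, hmod_add⟩ := hp (i + i') (j + j')
  have hdvd : J ∣ p i j + p i' j' - p (i + i') (j + j') :=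
    (modEq_add_of_modEq_mul_add hcop hmod hmod' hmod_add).dvd
  exact ⟨hdvd, eq_zero_or_eq_of_dvd_of_neg_lt_of_lt_two_mul hdvd (by linarith) (by linarith)⟩

/-- Let `J, L` be coprime positive integers and for integers `i, j`
let `p i j` denote the unique integer in `{0,…,J−1}` with `j ≡ p i j · L + i (mod J)`.
Then for all `i ∈ {0,…,L−1}` and `j ∈ {0,…,J−1}`, the quantity
`p i 0 + p 0 j − p i j` is a multiple of `J` and belongs to `{0, J}`. -/
theorem stmt4
    (J L : ℕ) (hJ : 0 < J) (hL : 0 < L) (hcop : Nat.gcd J L = 1)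
    (p : ℤ → ℤ → ℤ)
    (hp : ∀ i j : ℤ, 0 ≤ p i j ∧ p i j ≤ (J : ℤ) - 1 ∧ j ≡ p i j * L + i [ZMOD (J : ℤ)]) :
    ∀ i j : ℤ, 0 ≤ i → i ≤ (L : ℤ) - 1 → 0 ≤ j → j ≤ (J : ℤ) - 1 →
      (J : ℤ) ∣ (p i 0 + p 0 j - p i j) ∧
        (p i 0 + p 0 j - p i j = 0 ∨ p i 0 + p 0 j - p i j = (J : ℤ)) := by
  intro i j _ _ _ _
  simpa only [add_zero, zero_add] using
    stmt4_general (Nat.isCoprime_iff_coprime.mpr hcop) hp i 0 0 j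
end

section
/- Let N, K be positive integers with K ≥ N, and let v : ℤ → ℂ be finitely supported. The Weyl–Heisenberg set Φ = {φ_{k,i}} with φ_{k,i}[n] = v[n−iK]·exp(2πi k(n−iK)/N), k ∈ {0,…,N−1}, i ∈ ℤ, is orthonormal if and only if for every r ∈ {0,…,P−1} the L×J Laurent-polynomial matrix V_r^o(z), defined by [V_r^o(z)]_{i,j} = z^{n(i,j)}·V_{p(i,j)K+iP+r}(z) with n(i,j) = (p(i,0)+p(0,j)−p(i,j))/J ∈ {0,1}, is paraunitary with constant 1/N, i.e. Ṽ_r^o(z)·V_r^o(z) = (1/N)·I_J, where Ṽ_r^o(z) is obtained from V_r^o(z) by transposing, conjugating all coefficients, and substituting z⁻¹ for z. -/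
open Complex

/-!
Both sides say that, for every lag `b`, the sum of `conj v[n] · v[n + bK]` over each residue class
modulo `N` is `δ[b] / N`.

The inner product of `φ_{k,i}` and `φ_{l,j}` is, up to a phase, the discrete Fourier transform at
`k - l` of the residue class sums for the lag `b = i - j`, and the only function on `ℤ/N` with
transform `c · δ₀` is the constant `c / N`.

Since `n(i,j)` is an exact quotient and `M = JK`, the index
`p(i,j)K + iP + r + (m + n(i,j))M` equals `(c(i) + mL)N + (r + p(0,j)K)` with
`c(i) = (p(i,0)L + i) / J`. As `c` runs over a complete residue system modulo `L`, the pairs `(i,m)`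
run exactly once through the residue class of `r + p(0,j)K ≡ r + jP` modulo `N`. Hence the
coefficient of `z^{-t}` in the `(j,j')` entry of the product is the sum over this class for the lag
`p(0,j') - p(0,j) + tJ`. The classes of `r + jP` are all the classes modulo `N`, and as `p(0,·)` is
a complete residue system modulo `J`, for fixed `j` every lag comes from exactly one pair `(j',t)`.
-/

namespace WeylHeisenberg

open ZMod
open scoped ComplexConjugate

section CompleteResidueSystem

theorem bijective_natCast_fin (n : ℕ) [NeZero n] :
    Function.Bijective fun i : Fin n => ((i : ℕ) : ZMod n) := by
  refine (Fintype.bijective_iff_injective_and_card _).2 ⟨fun i j h => ?_, by simp⟩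
  exact Fin.ext (CharP.natCast_injOn_Iio (ZMod n) n i.2 j.2 h)

variable {n : ℕ} [NeZero n]

theorem bijective_intCast_of_mul_eq {c : Fin n → ℤ} {u : ZMod n}
    (hc : ∀ i : Fin n, (c i : ZMod n) * u = (i : ℕ)) :
    Function.Bijective fun i => (c i : ZMod n) := by
  refine (Fintype.bijective_iff_injective_and_card _).2 ⟨fun i j h => ?_, by simp⟩
  exact (bijective_natCast_fin n).1 (by simpa only [hc] using congrArg (· * u) h)

theorem bijective_add_mul_of_bijective_intCast {ι : Type*} {c : ι → ℤ}
    (hc : Function.Bijective fun i => (c i : ZMod n)) :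
    Function.Bijective fun x : ι × ℤ => c x.1 + x.2 * n := by
  constructor
  · rintro ⟨i, s⟩ ⟨j, t⟩ h
    obtain rfl : i = j := hc.1 (by simpa using congrArg ((↑) : ℤ → ZMod n) h)
    simpa [NeZero.ne n] using h
  · intro m
    obtain ⟨i, hi⟩ := hc.2 m
    obtain ⟨t, ht⟩ := (ZMod.intCast_eq_intCast_iff_dvd_sub _ _ n).1 hi
    exact ⟨(i, t), by linear_combination -ht⟩

theorem sum_tsum_add_mul {ι E : Type*} [Fintype ι] [AddCommGroup E] [UniformSpace E]
    [IsUniformAddGroup E] [CompleteSpace E] [T0Space E] {c : ι → ℤ}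
    (hc : Function.Bijective fun i => (c i : ZMod n)) {f : ℤ → E} (hf : Summable f) :
    ∑ i, ∑' m : ℤ, f (c i + m * n) = ∑' s, f s := by
  let e := Equiv.ofBijective _ (bijective_add_mul_of_bijective_intCast hc)
  have hfe : Summable fun x => f (e x) := e.summable_iff.2 hf
  rw [← e.tsum_eq, hfe.tsum_prod, tsum_fintype]
  rfl

end CompleteResidueSystem

/-- The sum of `f` over the residue class `a` modulo `N`, i.e. the `N`-periodization of `f`. -/
noncomputable def residueSum {E : Type*} [AddCommMonoid E] [TopologicalSpace E] (N : ℕ)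
    (f : ℤ → E) (a : ZMod N) : E :=
  ∑' n : ((↑) : ℤ → ZMod N) ⁻¹' {a}, f n

theorem residueSum_intCast {E : Type*} [AddCommMonoid E] [TopologicalSpace E] (N : ℕ) [NeZero N]
    (f : ℤ → E) (a : ℤ) : residueSum N f a = ∑' s : ℤ, f (s * N + a) := by
  let e : ℤ → ((↑) : ℤ → ZMod N) ⁻¹' {(a : ZMod N)} := fun s => ⟨s * N + a, by simp⟩
  have he : Function.Bijective e := by
    refine ⟨fun s t h => ?_, fun ⟨n, hn⟩ => ?_⟩
    · simpa [e, NeZero.ne N] using h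
    · obtain ⟨s, hs⟩ := (ZMod.intCast_eq_intCast_iff_dvd_sub a n N).1 (Eq.symm hn)
      exact ⟨s, Subtype.ext (by linear_combination -hs)⟩
  exact ((Equiv.ofBijective e he).tsum_eq fun n => f n).symm

section Fourier

variable {N : ℕ} [NeZero N]

theorem dft_eq_single_zero_iff {E : Type*} [AddCommGroup E] [Module ℂ E]
    {Φ : ZMod N → E} {c : E} :
    𝓕 Φ = Pi.single 0 c ↔ ∀ a, Φ a = (N : ℂ)⁻¹ • c := by
  have hconst : 𝓕 (fun _ : ZMod N => (N : ℂ)⁻¹ • c) = Pi.single 0 c := by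
    ext k
    have hsum := AddChar.sum_mulShift (-k) (isPrimitive_stdAddChar N)
    simp only [mul_neg] at hsum
    rw [dft_apply, ← Finset.sum_smul, hsum]
    rcases eq_or_ne k 0 with rfl | hk
    · simp [NeZero.ne N, ZMod.card]
    · simp [hk]
  rw [← hconst, dft.injective.eq_iff, funext_iff]

theorem dft_residueSum {E : Type*} [NormedAddCommGroup E] [NormedSpace ℂ E] [CompleteSpace E]
    {f : ℤ → E} (hf : Summable fun n => ‖f n‖) (k : ZMod N) :
    𝓕 (residueSum N f) k = ∑' n : ℤ, stdAddChar (-((n : ZMod N) * k)) • f n := by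
  have hchar : Summable fun n : ℤ => stdAddChar (-((n : ZMod N) * k)) • f n :=
    hf.of_norm_bounded fun n => by simp [norm_smul]
  rw [← (hchar.hasSum.tsum_fiberwise ((↑) : ℤ → ZMod N)).tsum_eq, tsum_fintype, dft_apply]
  refine Finset.sum_congr rfl fun a _ => ?_
  rw [residueSum, ← tsum_const_smul'']
  refine tsum_congr fun n => ?_
  rw [show ((n : ℤ) : ZMod N) = a from n.2]

end Fourier

/-- The summand at `n` of the autocorrelation of `v` at lag `d`. Its sums over residue classes are
the quantities in which both sides of the theorem are expressed. -/
noncomputable def lagProduct (v : ℤ → ℂ) (d n : ℤ) : ℂ :=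
  conj (v n) * v (n + d)

theorem summable_lagProduct {v : ℤ → ℂ} (hv : Summable fun n => ‖v n‖ ^ 2) (d : ℤ) :
    Summable (lagProduct v d) := by
  have hshift : Summable fun n => ‖v (n + d)‖ ^ 2 := (Equiv.addRight d).summable_iff.2 hv
  refine (hv.add hshift).of_norm_bounded fun n => ?_
  rw [lagProduct, norm_mul, RCLike.norm_conj]
  nlinarith [sq_nonneg (‖v n‖ - ‖v (n + d)‖), sq_nonneg (‖v n‖), sq_nonneg ‖v (n + d)‖]

/-- The waveform `φ_{k,i}` of the Weyl–Heisenberg set generated by `v`; the frequency index `k`,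
which matters only modulo `N`, ranges over all of `ℕ`. -/
noncomputable def waveform (v : ℤ → ℂ) (N K k : ℕ) (i n : ℤ) : ℂ :=
  v (n - i * K) * exp (2 * Real.pi * I * (k : ℂ) * ((n - i * (K : ℤ) : ℤ) : ℂ) / N)

section Orthonormality

variable {N : ℕ} [NeZero N] {v : ℤ → ℂ}

theorem waveform_eq_mul_stdAddChar (K k : ℕ) (i n : ℤ) :
    waveform v N K k i n =
      v (n - i * K) * stdAddChar ((k * (n - i * K) : ℤ) : ZMod N) := by
  rw [waveform, stdAddChar_coe]
  congr 2
  push_cast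
  ring

theorem tsum_conj_waveform_mul (hv : Summable fun n => ‖v n‖ ^ 2) (K k l : ℕ) (i j : ℤ) :
    ∑' n, conj (waveform v N K k i n) * waveform v N K l j n =
      stdAddChar ((l * ((i - j) * K) : ℤ) : ZMod N) *
        𝓕 (residueSum N (lagProduct v ((i - j) * K))) (k - l) := by
  rw [dft_residueSum (summable_lagProduct hv _).norm, ← tsum_mul_left,
    ← (Equiv.addRight (i * K : ℤ)).tsum_eq]
  refine tsum_congr fun n => ?_
  have hphase :
      stdAddChar (-((k * n : ℤ) : ZMod N)) *
          stdAddChar ((l * (n + (i - j) * K) : ℤ) : ZMod N) =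
        stdAddChar ((l * ((i - j) * K) : ℤ) : ZMod N) *
          stdAddChar (-((n : ZMod N) * (k - l : ZMod N))) := by
    rw [← AddChar.map_add_eq_mul, ← AddChar.map_add_eq_mul]
    congr 1
    push_cast
    ring
  rw [Equiv.coe_addRight, waveform_eq_mul_stdAddChar, waveform_eq_mul_stdAddChar,
    add_sub_cancel_right, show n + i * K - j * K = n + (i - j) * K by ring, map_mul,
    ← AddChar.map_neg_eq_conj, smul_eq_mul, lagProduct]
  linear_combination (conj (v n) * v (n + (i - j) * K)) * hphase

theorem orthonormal_waveform_iff_residueSum (hv : Summable fun n => ‖v n‖ ^ 2) (K : ℕ) :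
    (∀ (k l : Fin N) (i j : ℤ),
        ∑' n, conj (waveform v N K k i n) * waveform v N K l j n =
          if k = l ∧ i = j then 1 else 0) ↔
      ∀ (b : ℤ) (a : ZMod N),
        residueSum N (lagProduct v (b * K)) a = if b = 0 then 1 / (N : ℂ) else 0 := by
  have hinversion (b : ℤ) :
      (∀ a, residueSum N (lagProduct v (b * K)) a = if b = 0 then 1 / (N : ℂ) else 0) ↔
        𝓕 (residueSum N (lagProduct v (b * K))) = Pi.single 0 (if b = 0 then 1 else 0) := by
    rw [dft_eq_single_zero_iff]
    simp
  have hphase (k l : Fin N) (i j : ℤ) :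
      ∑' n, conj (waveform v N K k i n) * waveform v N K l j n =
          (if k = l ∧ i = j then 1 else 0) ↔
        𝓕 (residueSum N (lagProduct v ((i - j) * K))) ((k : ℕ) - (l : ℕ)) =
          if k = l ∧ i = j then 1 else 0 := by
    rw [tsum_conj_waveform_mul hv]
    rcases eq_or_ne i j with rfl | hij
    · simp
    · simp [hij, (AddChar.val_isUnit _ _).ne_zero]
  have hfin := bijective_natCast_fin N
  simp only [hinversion, hphase]
  constructor
  · intro h b
    ext d
    obtain ⟨k, rfl⟩ := hfin.2 d
    simpa [Pi.single_apply, ← hfin.1.eq_iff, ite_and] using h k 0 b 0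
  · intro h k l i j
    simp [h, Pi.single_apply, ← hfin.1.eq_iff, sub_eq_zero, ite_and]

end Orthonormality

/-- The coefficient of `z⁻ᵐ` in the entry `(i, j)` of the polyphase matrix `V_r^o(z)`. The factor
`z^{n(i,j)}` of that entry is the shift of `m` by `nn i j`. -/
def polyphaseCoeff (v : ℤ → ℂ) (P K M : ℕ) (p nn : ℤ → ℤ → ℤ) (r i j m : ℤ) : ℂ :=
  v (p i j * K + i * P + r + (m + nn i j) * M)

section Paraunitarity

variable {N K P J L M : ℕ} {v : ℤ → ℂ} {p nn : ℤ → ℤ → ℤ}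

theorem shift_ediv_mul_cancel (hJL : Nat.Coprime J L)
    (hp : ∀ i j : ℤ, j ≡ p i j * L + i [ZMOD J]) (i j : ℤ) :
    (p i 0 + p 0 j - p i j) / J * J = p i 0 + p 0 j - p i j := by
  refine Int.ediv_mul_cancel
    ((Nat.isCoprime_iff_coprime.2 hJL).dvd_of_dvd_mul_right ?_)
  convert ((hp i 0).dvd.add (hp 0 j).dvd).sub (hp i j).dvd using 1
  ring

theorem polyphaseCoeff_eq (hN : N = J * P) (hK : K = L * P) (hM : M = J * K) {i j c : ℤ}
    (hn : nn i j * J = p i 0 + p 0 j - p i j) (hc : c * J = p i 0 * L + i) (r m : ℤ) :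
    polyphaseCoeff v P K M p nn r i j m = v ((c + m * L) * N + (r + p 0 j * K)) := by
  subst hN hK hM
  rw [polyphaseCoeff]
  congr 1
  push_cast
  linear_combination (L * P : ℤ) * hn - (P : ℤ) * hc

variable [NeZero N] [NeZero L]

theorem sum_tsum_conj_polyphaseCoeff_mul (hN : N = J * P) (hK : K = L * P) (hM : M = J * K)
    (hv : Summable fun n => ‖v n‖ ^ 2)
    (hp : ∀ i j : ℤ, j ≡ p i j * L + i [ZMOD J])
    (hn : ∀ i j, nn i j * J = p i 0 + p 0 j - p i j) (r j j' t : ℤ) :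
    ∑ i : Fin L, ∑' m, conj (polyphaseCoeff v P K M p nn r i j m) *
        polyphaseCoeff v P K M p nn r i j' (t + m) =
      residueSum N (lagProduct v ((p 0 j' - p 0 j + t * J) * K))
        ((r + p 0 j * K : ℤ) : ZMod N) := by
  have hdvd (i : Fin L) : (J : ℤ) ∣ p i 0 * L + i := by simpa using (hp i 0).dvd
  choose c hc using fun i => exists_eq_mul_left_of_dvd (hdvd i)
  have hrows : Function.Bijective fun i => (c i : ZMod L) :=
    bijective_intCast_of_mul_eq (u := J) fun i => by
      simpa using congrArg ((↑) : ℤ → ZMod L) (hc i).symm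
  set f : ℤ → ℂ := lagProduct v ((p 0 j' - p 0 j + t * J) * K)
  have hf : Summable fun s : ℤ => f (s * N + (r + p 0 j * K)) :=
    (summable_lagProduct hv _).comp_injective fun s s' h => by simpa [NeZero.ne N] using h
  rw [residueSum_intCast, ← sum_tsum_add_mul hrows hf]
  refine Finset.sum_congr rfl fun i _ => tsum_congr fun m => ?_
  rw [polyphaseCoeff_eq hN hK hM (hn i j) (hc i).symm,
    polyphaseCoeff_eq hN hK hM (hn i j') (hc i).symm]
  simp only [f, lagProduct]
  congr 2
  rw [hN, hK]
  push_cast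
  ring

theorem paraunitary_polyphase_iff_residueSum [NeZero J]
    (hN : N = J * P) (hK : K = L * P) (hM : M = J * K)
    (hv : Summable fun n => ‖v n‖ ^ 2)
    (hp : ∀ i j : ℤ, j ≡ p i j * L + i [ZMOD J])
    (hn : ∀ i j, nn i j * J = p i 0 + p 0 j - p i j) :
    (∀ (r : Fin P) (j j' : Fin J) (t : ℤ),
        ∑ i : Fin L, ∑' m, conj (polyphaseCoeff v P K M p nn r i j m) *
            polyphaseCoeff v P K M p nn r i j' (t + m) =
          if j = j' ∧ t = 0 then 1 / (N : ℂ) else 0) ↔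
      ∀ (b : ℤ) (a : ZMod N),
        residueSum N (lagProduct v (b * K)) a = if b = 0 then 1 / (N : ℂ) else 0 := by
  have hcolumns : Function.Bijective fun x : Fin J × ℤ => p 0 x.1 + x.2 * J :=
    bijective_add_mul_of_bijective_intCast (bijective_intCast_of_mul_eq (u := L) fun j => by
      simpa using ((ZMod.intCast_eq_intCast_iff _ _ J).2 (hp 0 j)).symm)
  have hlag (j j' : Fin J) (t : ℤ) : p 0 j' - p 0 j + t * J = 0 ↔ j = j' ∧ t = 0 := by
    have hinj := hcolumns.1.eq_iff (a := (j', t)) (b := (j, 0))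
    simp only [Prod.mk.injEq, zero_mul, add_zero] at hinj
    rw [eq_comm (a := j), ← hinj, ← sub_eq_zero (b := p 0 j), add_sub_right_comm]
  have hclass (r : Fin P) (j : Fin J) :
      ((r + p 0 j * K : ℤ) : ZMod N) = ((finProdFinEquiv (j, r) : ℕ) : ZMod N) := by
    obtain ⟨d, hd⟩ := (hp 0 j).dvd
    rw [← Int.cast_natCast (R := ZMod N), ZMod.intCast_eq_intCast_iff_dvd_sub]
    refine ⟨-d, ?_⟩
    rw [hN, hK, finProdFinEquiv_apply_val]
    push_cast
    linear_combination -(P : ℤ) * hd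
  simp only [sum_tsum_conj_polyphaseCoeff_mul hN hK hM hv hp hn, ← hlag, hclass]
  refine ⟨fun h b a => ?_, fun h r j j' t => h _ _⟩
  subst hN
  obtain ⟨x, rfl⟩ := (bijective_natCast_fin (J * P)).2 a
  obtain ⟨⟨j, r⟩, rfl⟩ := finProdFinEquiv.surjective x
  obtain ⟨⟨j', t⟩, hb⟩ := hcolumns.2 (b + p 0 j)
  obtain rfl : p 0 j' - p 0 j + t * J = b := by linear_combination hb
  exact h r j j' t

end Paraunitarity

end WeylHeisenberg

open WeylHeisenberg ComplexConjugate in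
theorem stmt5_general {N K P J L M : ℕ} (hN : 0 < N) (hK : 0 < K)
    (hP : P = Nat.gcd N K) (hJ : J = N / P) (hL : L = K / P) (hM : M = Nat.lcm N K)
    {v : ℤ → ℂ} (hv : Summable fun n => ‖v n‖ ^ 2)
    {p : ℤ → ℤ → ℤ} (hp : ∀ i j : ℤ, j ≡ p i j * L + i [ZMOD J])
    {nn : ℤ → ℤ → ℤ} (hnn : ∀ i j : ℤ, nn i j = (p i 0 + p 0 j - p i j) / J) :
    (∀ (k l : Fin N) (i j : ℤ),
        ∑' n, conj (waveform v N K k i n) * waveform v N K l j n =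
          if k = l ∧ i = j then 1 else 0) ↔
      ∀ (r : Fin P) (j j' : Fin J) (t : ℤ),
        ∑ i : Fin L, ∑' m, conj (polyphaseCoeff v P K M p nn r i j m) *
            polyphaseCoeff v P K M p nn r i j' (t + m) =
          if j = j' ∧ t = 0 then 1 / (N : ℂ) else 0 := by
  have hNJ : N = J * P := by rw [hJ, hP, Nat.div_mul_cancel (Nat.gcd_dvd_left N K)]
  have hKL : K = L * P := by rw [hL, hP, Nat.div_mul_cancel (Nat.gcd_dvd_right N K)]
  have hMJ : M = J * K := by
    rw [hM, hJ, hP, Nat.lcm, Nat.div_mul_right_comm (Nat.gcd_dvd_left N K)]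
  have hJL : Nat.Coprime J L := by
    rw [hJ, hL, hP]
    exact Nat.coprime_div_gcd_div_gcd (Nat.gcd_pos_of_pos_left K hN)
  have : NeZero N := ⟨hN.ne'⟩
  have : NeZero J := ⟨(Nat.pos_of_mul_pos_right (hNJ ▸ hN)).ne'⟩
  have : NeZero L := ⟨(Nat.pos_of_mul_pos_right (hKL ▸ hK)).ne'⟩
  have hshift (i j : ℤ) : nn i j * J = p i 0 + p 0 j - p i j := by
    rw [hnn, shift_ediv_mul_cancel hJL hp]
  exact (orthonormal_waveform_iff_residueSum hv K).trans
    (paraunitary_polyphase_iff_residueSum hNJ hKL hMJ hv hp hshift).symm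

/-- The Weyl–Heisenberg set
`Φ = {φ_{k,i}[n] = v[n−iK]·exp(2πi k(n−iK)/N)}` (`k ∈ {0,…,N−1}`, `i ∈ ℤ`)
is orthonormal if and only if, for every `r ∈ {0,…,P−1}`, the `L×J`
Laurent-polynomial matrix `V_r^o(z)` with entries
`[V_r^o(z)]_{i,j} = z^{n(i,j)}·V_{p(i,j)K+iP+r}(z)`, `n(i,j) = (p(i,0)+p(0,j)−p(i,j))/J`,
is paraunitary with constant `1/N`, i.e. `Ṽ_r^o(z)·V_r^o(z) = (1/N)·I_J`.

Laurent polynomials `∑ c n z^(−n)` are represented by their coefficient functions;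
the entry `[V_r^o(z)]_{i,j}` has coefficient `v (p(i,j)K + iP + r + (m + n(i,j))·M)`
at `z^(−m)` (since `V_{j₀}(z) = ∑_m v[j₀+mM] z^(−m)`), and the paraunitarity
`Ṽ_r^o(z)·V_r^o(z) = (1/N)·I_J` is stated coefficientwise:
for all columns `j, j'` and every `t : ℤ`, the coefficient of `z^(−t)` in
`(Ṽ_r^o·V_r^o)_{j,j'}`, namely
`∑_{i<L} ∑_{m∈ℤ} conj(c_{r,i,j}(m))·c_{r,i,j'}(t+m)`, equals `(1/N)·δ[j−j']·δ[t]`. -/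
theorem stmt5
    (N K P J L M : ℕ) (hN : 0 < N) (hNK : N ≤ K)
    (hP : P = Nat.gcd N K) (hJ : J = N / P) (hL : L = K / P) (hM : M = Nat.lcm N K)
    (v : ℤ → ℂ) (hv : (Function.support v).Finite)
    (p : ℤ → ℤ → ℤ)
    (hp : ∀ i j : ℤ, 0 ≤ p i j ∧ p i j < (J : ℤ) ∧ j ≡ p i j * (L : ℤ) + i [ZMOD (J : ℤ)])
    (nn : ℤ → ℤ → ℤ)
    (hnn : ∀ i j : ℤ, nn i j = (p i 0 + p 0 j - p i j) / (J : ℤ)) :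
    -- orthonormality of Φ
    (∀ (k l : Fin N) (i j : ℤ),
        ∑' n : ℤ,
          (starRingEnd ℂ)
              (v (n - i * K) *
                Complex.exp (2 * Real.pi * Complex.I * ((k : ℕ) : ℂ) * ((n - i * (K : ℤ) : ℤ) : ℂ) / N)) *
            (v (n - j * K) *
              Complex.exp (2 * Real.pi * Complex.I * ((l : ℕ) : ℂ) * ((n - j * (K : ℤ) : ℤ) : ℂ) / N))
          = if k = l ∧ i = j then 1 else 0)
    ↔
    -- paraunitarity (with constant 1/N) of all the matrices V_r^o(z)
    (∀ (r : Fin P) (j j' : Fin J) (t : ℤ),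
        ∑ i : Fin L,
          ∑' m : ℤ,
            (starRingEnd ℂ)
                (v (p (i : ℤ) (j : ℤ) * K + (i : ℤ) * P + (r : ℤ) + (m + nn (i : ℤ) (j : ℤ)) * M)) *
              v (p (i : ℤ) (j' : ℤ) * K + (i : ℤ) * P + (r : ℤ) + (t + m + nn (i : ℤ) (j' : ℤ)) * M)
          = if j = j' ∧ t = 0 then 1 / (N : ℂ) else 0) := by
  exact stmt5_general hN (hN.trans_le hNK) hP hJ hL hM
    (summable_of_hasFiniteSupport (hv.subset fun n hn => by simpa using hn))
    (fun i j => (hp i j).2.2) hnn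
end

section
/- Let N, K be positive integers with K ≥ N, P = gcd(N,K), J = N/P, L = K/P, M = lcm(N,K). Given any family of P matrices V_r^o(z), r ∈ {0,…,P−1}, each an L×J matrix of Laurent polynomials over ℂ that is paraunitary with constant 1/N (i.e. Ṽ_r^o(z)·V_r^o(z) = (1/N)·I_J, where tilde denotes transposition, coefficient conjugation, and the substitution z ↦ z⁻¹), suppose all entries are finitely supported and define v : ℤ → ℂ by declaring its M-component polyphase components to be V_{p(i,j)K+iP+r}(z) = z^{−n(i,j)}·[V_r^o(z)]_{i,j}, where n(i,j) = (p(i,0)+p(0,j)−p(i,j))/J. Then the Weyl–Heisenberg set Φ generated by v is orthonormal. -/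
open Complex

/-!
The inner product of two waveforms is a sum over `ℤ`; split it over the residue classes modulo `N`,
on each of which the modulating character is constant. If on every class the correlation of `v`
with its translate by `d K` is `1 / N` for `d = 0` and `0` otherwise, then the inner product is
`1 / N` times the sum of a character of `ℤ/N`, and orthonormality is orthogonality of characters.

To verify the hypothesis on correlations, note that `p(i,j) K + i P + r + m M ≡ j P + r (mod N)`,
and that for fixed `r`, `j` these integers, with `i < L` and `m ∈ ℤ`, enumerate the whole residue
class. Translation by `d K` keeps `r` and `i`, and moves `j` to `j' ≡ j + d L (mod J)`. The delays
`n(i,j)` are exactly what makes the resulting shift of the coefficient index independent of `i`: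
it is `t = (d + p(0,j) - p(0,j')) / J`. The sum over `i` and `m` is therefore the entry `(j, j')`
of the coefficient at `t` in the paraunitarity relation, and `j = j'`, `t = 0` means `d = 0`.
-/

section

open scoped ComplexConjugate

theorem hasSum_of_hasSum_residueClass {ι α : Type*} [Fintype ι] [AddCommMonoid α]
    [TopologicalSpace α] [ContinuousAdd α] {b : ℕ} [NeZero b] {s : ι → ℤ}
    (hs : Function.Bijective fun i => (s i : ZMod b)) {f : ℤ → α} {a : ι → α}
    (h : ∀ i, HasSum (fun m : ℤ => f (s i + b * m)) (a i)) : HasSum f (∑ i, a i) := by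
  have hinj (i : ι) : Function.Injective fun m : ℤ => s i + b * m :=
    (add_right_injective _).comp (mul_right_injective₀ (NeZero.ne (b : ℤ)))
  have hcast (i : ι) (m : ℤ) : ((s i + b * m : ℤ) : ZMod b) = s i := by simp
  have hdisj : Pairwise (Function.onFun Disjoint fun i => Set.range fun m : ℤ => s i + b * m) := by
    intro i i' hne
    refine Set.disjoint_left.mpr ?_
    rintro _ ⟨m, rfl⟩ ⟨m', hm'⟩
    refine hne (hs.injective ?_)
    simpa only [hcast] using congrArg (Int.cast : ℤ → ZMod b) hm'.symm
  have hcover : ⋃ i ∈ Finset.univ, Set.range (fun m : ℤ => s i + b * m) = Set.univ := by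
    refine Set.eq_univ_of_forall fun n => ?_
    obtain ⟨i, hi⟩ := hs.surjective n
    obtain ⟨m, hm⟩ := (ZMod.intCast_eq_intCast_iff_dvd_sub _ _ _).mp hi
    exact Set.mem_biUnion (Finset.mem_univ i) ⟨m, by simp only [← hm]; ring⟩
  have hsum := hasSum_sum_disjoint (f := f) Finset.univ (hdisj.set_pairwise _)
    fun i _ => ((hinj i).hasSum_range_iff).mpr (h i)
  rw [hcover] at hsum
  exact (hasSum_subtype_iff_of_support_subset (Set.subset_univ _)).mp hsum

theorem summable_conj_mul_of_sq {ι : Type*} {f g : ι → ℂ} (hf : Summable fun i => ‖f i‖ ^ 2)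
    (hg : Summable fun i => ‖g i‖ ^ 2) : Summable fun i => conj (f i) * g i := by
  refine (hf.add hg).of_norm_bounded fun i => ?_
  rw [norm_mul, RCLike.norm_conj]
  linarith [two_mul_le_add_sq ‖f i‖ ‖g i‖, mul_nonneg (norm_nonneg (f i)) (norm_nonneg (g i))]

section WeylHeisenberg

variable {N : ℕ} [NeZero N]

/-- The waveform `φ_{k,i}` of the Weyl–Heisenberg set generated by `v`. The frequency is taken
modulo `N`, and `exp (2πi k n / N)` is the standard additive character of `ZMod N` at `k n`. -/
noncomputable def weylHeisenberg (N : ℕ) [NeZero N] (K : ℤ) (v : ℤ → ℂ) (k : ZMod N) (i n : ℤ) :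
    ℂ :=
  v (n - i * K) * ZMod.stdAddChar (k * ((n - i * K : ℤ) : ZMod N))

theorem weylHeisenberg_natCast (K : ℤ) (v : ℤ → ℂ) (k : ℕ) (i n : ℤ) :
    weylHeisenberg N K v k i n = v (n - i * K) *
      Complex.exp (2 * Real.pi * Complex.I * (k : ℂ) * ((n - i * K : ℤ) : ℂ) / N) := by
  have hphase : (k : ZMod N) * ((n - i * K : ℤ) : ZMod N) = ((k * (n - i * K) : ℤ) : ZMod N) := by
    push_cast
    rfl
  rw [weylHeisenberg, hphase, ZMod.stdAddChar_coe, Int.cast_mul, Int.cast_natCast,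
    mul_assoc _ (k : ℂ)]

theorem conj_weylHeisenberg_mul_weylHeisenberg (K : ℤ) (v : ℤ → ℂ) (k l : ZMod N) (i j n : ℤ) :
    conj (weylHeisenberg N K v k i (n + i * K)) * weylHeisenberg N K v l j (n + i * K) =
      conj (v n) * v (n + (i - j) * K) *
        ZMod.stdAddChar ((n : ZMod N) * (l - k) + l * (((i - j) * K : ℤ) : ZMod N)) := by
  have hsub : n + i * K - j * K = n + (i - j) * K := by ring
  have hphase : (n : ZMod N) * (l - k) + l * (((i - j) * K : ℤ) : ZMod N) =
      -(k * (n : ZMod N)) + l * ((n + (i - j) * K : ℤ) : ZMod N) := by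
    push_cast
    ring
  rw [weylHeisenberg, weylHeisenberg, add_sub_cancel_right, hsub, hphase, AddChar.map_add_eq_mul,
    AddChar.map_neg_eq_conj, map_mul]
  ring

theorem hasSum_conj_weylHeisenberg_mul {K : ℤ} {v : ℤ → ℂ}
    (hv : ∀ x d : ℤ, HasSum (fun m : ℤ => conj (v (x + N * m)) * v (x + N * m + d * K))
      (if d = 0 then 1 / (N : ℂ) else 0)) (k l : ZMod N) (i j : ℤ) :
    HasSum (fun n => conj (weylHeisenberg N K v k i n) * weylHeisenberg N K v l j n)
      (if k = l ∧ i = j then 1 else 0) := by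
  have hbij : Function.Bijective fun x : ZMod N => ((x.cast : ℤ) : ZMod N) := by
    simp only [ZMod.intCast_zmod_cast]
    exact Function.bijective_id
  have hclass (x : ZMod N) : HasSum (fun m : ℤ => conj (v (x.cast + N * m)) *
      v (x.cast + N * m + (i - j) * K) * ZMod.stdAddChar
        (((x.cast + N * m : ℤ) : ZMod N) * (l - k) + l * (((i - j) * K : ℤ) : ZMod N)))
      ((if i - j = 0 then 1 / (N : ℂ) else 0) *
        ZMod.stdAddChar (x * (l - k) + l * (((i - j) * K : ℤ) : ZMod N))) := by
    have hx (m : ℤ) : ((x.cast + N * m : ℤ) : ZMod N) = x := by simp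
    simp only [hx]
    exact (hv x.cast (i - j)).mul_right _
  have horth : ∑ x : ZMod N, (if i - j = 0 then 1 / (N : ℂ) else 0) *
      ZMod.stdAddChar (x * (l - k) + l * (((i - j) * K : ℤ) : ZMod N)) =
        if k = l ∧ i = j then 1 else 0 := by
    simp only [← Finset.mul_sum, AddChar.map_add_eq_mul, ← Finset.sum_mul, sub_eq_zero,
      AddChar.sum_mulShift _ (ZMod.isPrimitive_stdAddChar N), eq_comm (a := l), ZMod.card]
    by_cases hkl : k = l <;> by_cases hij : i = j <;> simp [hkl, hij]
  rw [← (Equiv.addRight (i * K)).hasSum_iff, ← horth]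
  simp only [Function.comp_def, Equiv.coe_addRight, conj_weylHeisenberg_mul_weylHeisenberg]
  exact hasSum_of_hasSum_residueClass hbij hclass

end WeylHeisenberg

section Polyphase

/-- The defining congruence of the `p(i,j)` of the paper, with any choice of representatives
modulo `J`. -/
def IsResidueSolution (J L : ℕ) (p : ℤ → ℤ → ℤ) : Prop :=
  ∀ i j : ℤ, j ≡ p i j * L + i [ZMOD J]

/-- The exponent `n(i,j)` of the paper; the division is exact by
`IsResidueSolution.mul_polyphaseDelay`. -/
def polyphaseDelay (J : ℕ) (p : ℤ → ℤ → ℤ) (i j : ℤ) : ℤ :=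
  (p i 0 + p 0 j - p i j) / J

/-- The time `p(i,j) K + i P + r + m M` of the `m`-th coefficient of the polyphase component
attached to `(r, i, j)`, where `K = L P` and `M = J L P`. -/
def polyphaseIndex (P J L : ℕ) (p : ℤ → ℤ → ℤ) (r i j m : ℤ) : ℤ :=
  p i j * (L * P : ℕ) + i * P + r + m * (J * L * P : ℕ)

/-- `A` is paraunitary with constant `γ`: `Ã(z) A(z) = γ I`, coefficient by coefficient, for the
matrix of Laurent series whose entry `(i, j)` has coefficient `A i j m` at `z^(-m)`. -/
def IsParaunitary {ι κ : Type*} [Fintype ι] [DecidableEq κ] (A : ι → κ → ℤ → ℂ) (γ : ℂ) : Prop :=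
  ∀ (j j' : κ) (t : ℤ),
    ∑ i, ∑' m : ℤ, conj (A i j m) * A i j' (t + m) = if j = j' ∧ t = 0 then γ else 0

/-- The polyphase components of `v` are `z^(-n(i,j)) [V_r(z)]_{i,j}`, where `c r i j` is the
coefficient sequence of `[V_r(z)]_{i,j}`. -/
def HasPolyphaseComponents {P J L : ℕ} (p : ℤ → ℤ → ℤ) (c : Fin P → Fin L → Fin J → ℤ → ℂ)
    (v : ℤ → ℂ) : Prop :=
  ∀ (r : Fin P) (i : Fin L) (j : Fin J) (m : ℤ),
    v (polyphaseIndex P J L p r i j m) = c r i j (m - polyphaseDelay J p i j)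

variable {P J L : ℕ} {p : ℤ → ℤ → ℤ}

theorem IsResidueSolution.intCast_mul (hp : IsResidueSolution J L p) (i j : ℤ) :
    (p i j : ZMod J) * L = j - i := by
  have h := (ZMod.intCast_eq_intCast_iff _ _ _).mpr (hp i j)
  push_cast at h
  exact eq_sub_of_add_eq h.symm

theorem IsResidueSolution.mul_polyphaseDelay (hp : IsResidueSolution J L p) (hJL : J.Coprime L)
    (i j : ℤ) : J * polyphaseDelay J p i j = p i 0 + p 0 j - p i j := by
  refine Int.mul_ediv_cancel' ((ZMod.intCast_zmod_eq_zero_iff_dvd _ _).mp ?_)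
  refine ((ZMod.isUnit_iff_coprime L J).mpr hJL.symm).mul_left_injective ?_
  have hi := hp.intCast_mul i 0
  have hj := hp.intCast_mul 0 j
  have hij := hp.intCast_mul i j
  push_cast at hi hj ⊢
  linear_combination hi + hj - hij

theorem IsResidueSolution.dvd_add_sub (hp : IsResidueSolution J L p) (hJL : J.Coprime L)
    {j j' d : ℤ} (hj : j' ≡ j + d * L [ZMOD J]) (i : ℤ) : (J : ℤ) ∣ p i j + d - p i j' := by
  refine (ZMod.intCast_zmod_eq_zero_iff_dvd _ _).mp ?_
  refine ((ZMod.isUnit_iff_coprime L J).mpr hJL.symm).mul_left_injective ?_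
  have hjd := (ZMod.intCast_eq_intCast_iff _ _ _).mpr hj
  have hij := hp.intCast_mul i j
  have hij' := hp.intCast_mul i j'
  push_cast at hjd ⊢
  linear_combination hij - hij' - hjd

theorem IsResidueSolution.polyphaseIndex_modEq (hp : IsResidueSolution J L p) (r i j m : ℤ) :
    polyphaseIndex P J L p r i j m ≡ j * P + r [ZMOD (J * P : ℕ)] := by
  obtain ⟨s, hs⟩ := (hp i j).dvd
  refine (Int.modEq_iff_dvd.mpr ⟨s + m * L, ?_⟩).symm
  simp only [polyphaseIndex]
  push_cast
  linear_combination (P : ℤ) * hs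

theorem polyphaseIndex_eq_add_mul (r i j m : ℤ) :
    polyphaseIndex P J L p r i j m =
      polyphaseIndex P J L p r i j 0 + (J * P : ℕ) * (L * m) := by
  simp only [polyphaseIndex]
  push_cast
  ring

theorem exists_modEq_mul_add [NeZero P] [NeZero J] (x : ℤ) :
    ∃ (r : Fin P) (j : Fin J), x ≡ j * P + r [ZMOD (J * P : ℕ)] := by
  obtain ⟨⟨y, r⟩, rfl⟩ := (Int.divModEquiv P).symm.surjective x
  obtain ⟨⟨q, j⟩, rfl⟩ := (Int.divModEquiv J).symm.surjective y
  refine ⟨r, j, (Int.modEq_iff_dvd.mpr ⟨q, ?_⟩).symm⟩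
  simp only [Int.divModEquiv_symm_apply]
  push_cast
  ring

theorem IsResidueSolution.hasSum_residueClass [NeZero P] [NeZero L]
    (hp : IsResidueSolution J L p) {α : Type*} [AddCommMonoid α] [TopologicalSpace α]
    [ContinuousAdd α] {x r j : ℤ} (hx : x ≡ j * P + r [ZMOD (J * P : ℕ)]) {f : ℤ → α}
    {a : Fin L → α} (h : ∀ i : Fin L, HasSum (fun m => f (polyphaseIndex P J L p r i j m)) (a i)) :
    HasSum (fun m : ℤ => f (x + (J * P : ℕ) * m)) (∑ i, a i) := by
  have hoffset (i : Fin L) :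
      ∃ s : ℤ, polyphaseIndex P J L p r i j 0 - x = (J * P : ℕ) * s :=
    (hx.trans (hp.polyphaseIndex_modEq r i j 0).symm).dvd
  choose s hs using hoffset
  have hinj : Function.Injective fun i => (s i : ZMod L) := by
    intro i i' hii'
    obtain ⟨q, hq⟩ := (ZMod.intCast_eq_intCast_iff_dvd_sub _ _ _).mp hii'
    have hdiff : (i' : ℤ) - i = L * (J * q + p i j - p i' j) := by
      refine mul_left_cancel₀ (NeZero.ne (P : ℤ)) ?_
      have hi := hs i
      have hi' := hs i'
      simp only [polyphaseIndex] at hi hi'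
      push_cast at hi hi'
      linear_combination hi' - hi + (J : ℤ) * P * hq
    refine Fin.ext (Nat.ModEq.eq_of_lt_of_lt ?_ i.isLt i'.isLt)
    exact Int.natCast_modEq_iff.mp (Int.modEq_iff_dvd.mpr ⟨_, hdiff⟩)
  have hbij : Function.Bijective fun i => (s i : ZMod L) :=
    (Fintype.bijective_iff_injective_and_card _).mpr ⟨hinj, by rw [Fintype.card_fin, ZMod.card]⟩
  refine hasSum_of_hasSum_residueClass hbij fun i => ?_
  convert h i using 3 with m
  rw [polyphaseIndex_eq_add_mul]
  linear_combination -hs i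

theorem HasPolyphaseComponents.exists_translate [NeZero J] (hp : IsResidueSolution J L p)
    (hJL : J.Coprime L) {c : Fin P → Fin L → Fin J → ℤ → ℂ} {v : ℤ → ℂ}
    (hv : HasPolyphaseComponents p c v) (j : Fin J) (d : ℤ) :
    ∃ (j' : Fin J) (t : ℤ), (j = j' ∧ t = 0 ↔ d = 0) ∧
      ∀ (r : Fin P) (i : Fin L) (m : ℤ),
        v (polyphaseIndex P J L p r i j m + d * (L * P : ℕ)) =
          c r i j' (t + (m - polyphaseDelay J p i j)) := by
  have hJ : (J : ℤ) ≠ 0 := NeZero.ne _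
  obtain ⟨⟨q, j'⟩, hj'⟩ := (Int.divModEquiv J).symm.surjective (j + d * L)
  rw [Int.divModEquiv_symm_apply] at hj'
  dsimp only at hj'
  have hmod : (j' : ℤ) ≡ j + d * L [ZMOD J] :=
    Int.modEq_iff_dvd.mpr ⟨q, by linear_combination -hj'⟩
  obtain ⟨t, ht⟩ := hp.dvd_add_sub hJL hmod 0
  refine ⟨j', t, ⟨?_, ?_⟩, fun r i m => ?_⟩
  · rintro ⟨rfl, rfl⟩
    linarith
  · rintro rfl
    have hjj' : j = j' := by
      refine Fin.ext (Nat.ModEq.eq_of_lt_of_lt (Int.natCast_modEq_iff.mp ?_) j.isLt j'.isLt)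
      simpa only [zero_mul, add_zero] using hmod.symm
    subst hjj'
    exact ⟨rfl, (mul_eq_zero_iff_left hJ).mp (by linarith)⟩
  · obtain ⟨e, he⟩ := hp.dvd_add_sub hJL hmod i
    have hindex : polyphaseIndex P J L p r i j m + d * (L * P : ℕ) =
        polyphaseIndex P J L p r i j' (m + e) := by
      simp only [polyphaseIndex]
      push_cast
      linear_combination ((L : ℤ) * P) * he
    have hdelay : m + e - polyphaseDelay J p i j' = t + (m - polyphaseDelay J p i j) := by
      refine mul_left_cancel₀ hJ ?_
      linear_combination ht - he - hp.mul_polyphaseDelay hJL i j' + hp.mul_polyphaseDelay hJL i j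
    rw [hindex, hv, hdelay]

theorem HasPolyphaseComponents.hasSum_conj_mul_translate [NeZero P] [NeZero J] [NeZero L]
    (hp : IsResidueSolution J L p) (hJL : J.Coprime L) {c : Fin P → Fin L → Fin J → ℤ → ℂ} {γ : ℂ}
    (hc : ∀ r i j, Summable fun m => ‖c r i j m‖ ^ 2) (hpara : ∀ r, IsParaunitary (c r) γ)
    {v : ℤ → ℂ} (hv : HasPolyphaseComponents p c v) (x d : ℤ) :
    HasSum (fun m : ℤ => conj (v (x + (J * P : ℕ) * m)) *
      v (x + (J * P : ℕ) * m + d * (L * P : ℕ))) (if d = 0 then γ else 0) := by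
  obtain ⟨r, j, hx⟩ := exists_modEq_mul_add (P := P) (J := J) x
  obtain ⟨j', t, hdiag, htranslate⟩ := hv.exists_translate hp hJL j d
  simp only [← hdiag, ← hpara r j j' t]
  refine hp.hasSum_residueClass hx (f := fun n => conj (v n) * v (n + d * (L * P : ℕ))) fun i => ?_
  simp only [htranslate, hv r i j]
  have hsum : Summable fun m => conj (c r i j m) * c r i j' (t + m) :=
    summable_conj_mul_of_sq (hc r i j) ((Equiv.addLeft t).summable_iff.mpr (hc r i j'))
  simpa only [Function.comp_def, Equiv.subRight_apply] using
    (Equiv.subRight (polyphaseDelay J p i j)).hasSum_iff.mpr hsum.hasSum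

end Polyphase

end

theorem stmt6_general
    (N K P J L M : ℕ) (hN : 0 < N) (hK : 0 < K)
    (hP : P = Nat.gcd N K) (hJ : J = N / P) (hL : L = K / P) (hM : M = Nat.lcm N K)
    (p : ℤ → ℤ → ℤ)
    (hp : ∀ i j : ℤ, j ≡ p i j * (L : ℤ) + i [ZMOD (J : ℤ)])
    (nn : ℤ → ℤ → ℤ)
    (hnn : ∀ i j : ℤ, nn i j = (p i 0 + p 0 j - p i j) / (J : ℤ))
    (c : Fin P → Fin L → Fin J → ℤ → ℂ)
    (hc : ∀ (r : Fin P) (i : Fin L) (j : Fin J), Summable fun m => ‖c r i j m‖ ^ 2)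
    (hpara : ∀ (r : Fin P) (j j' : Fin J) (t : ℤ),
        ∑ i : Fin L, ∑' m : ℤ, (starRingEnd ℂ) (c r i j m) * c r i j' (t + m)
          = if j = j' ∧ t = 0 then 1 / (N : ℂ) else 0)
    (v : ℤ → ℂ)
    (hv : ∀ (r : Fin P) (i : Fin L) (j : Fin J) (m : ℤ),
        v (p (i : ℤ) (j : ℤ) * K + (i : ℤ) * P + (r : ℤ) + m * M)
          = c r i j (m - nn (i : ℤ) (j : ℤ))) :
    ∀ (k l : Fin N) (i j : ℤ),
      HasSum (fun n : ℤ =>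
          (starRingEnd ℂ)
              (v (n - i * K) * Complex.exp
                (2 * Real.pi * Complex.I * ((k : ℕ) : ℂ) * ((n - i * (K : ℤ) : ℤ) : ℂ) / N)) *
            (v (n - j * K) * Complex.exp
              (2 * Real.pi * Complex.I * ((l : ℕ) : ℂ) * ((n - j * (K : ℤ) : ℤ) : ℂ) / N)))
        (if k = l ∧ i = j then 1 else 0) := by
  intro k l i j
  have hP0 : 0 < P := hP ▸ Nat.gcd_pos_of_pos_left K hN
  have hJL : J.Coprime L := by
    rw [hJ, hL, hP]
    exact Nat.coprime_div_gcd_div_gcd (hP ▸ hP0)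
  have hNJ : N = J * P := by rw [hJ, Nat.div_mul_cancel (hP ▸ Nat.gcd_dvd_left N K)]
  have hKL : K = L * P := by rw [hL, Nat.div_mul_cancel (hP ▸ Nat.gcd_dvd_right N K)]
  have hMP : M = J * L * P := by
    rw [hM, hNJ, hKL, Nat.lcm_mul_right, hJL.lcm_eq_mul]
  obtain rfl : nn = polyphaseDelay J p := funext₂ hnn
  clear hP hJ hL hM hnn
  subst hNJ hKL hMP
  have : NeZero P := ⟨hP0.ne'⟩
  have : NeZero J := ⟨left_ne_zero_of_mul hN.ne'⟩
  have : NeZero L := ⟨left_ne_zero_of_mul hK.ne'⟩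
  have hcorr (x d : ℤ) := HasPolyphaseComponents.hasSum_conj_mul_translate hp hJL hc hpara hv x d
  have hkl : ((k : ℕ) : ZMod (J * P)) = (l : ℕ) ↔ k = l := by
    rw [ZMod.natCast_eq_natCast_iff, Fin.ext_iff]
    exact ⟨fun h => h.eq_of_lt_of_lt k.isLt l.isLt, fun h => h ▸ rfl⟩
  simpa only [weylHeisenberg_natCast, hkl] using
    hasSum_conj_weylHeisenberg_mul hcorr (k : ℕ) (l : ℕ) i j

/-- Given any family of `P` matrices `V_r^o(z)`, `r ∈ {0,…,P−1}`,
each an `L×J` matrix of (finitely supported) Laurent polynomials over `ℂ` that is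
paraunitary with constant `1/N` (`Ṽ_r^o(z)·V_r^o(z) = (1/N)·I_J`), if `v : ℤ → ℂ`
is defined by declaring its `M`-component polyphase components to be
`V_{p(i,j)K+iP+r}(z) = z^{−n(i,j)}·[V_r^o(z)]_{i,j}` with
`n(i,j) = (p(i,0)+p(0,j)−p(i,j))/J`, then the Weyl–Heisenberg set `Φ` generated
by `v` is orthonormal.

Laurent polynomials are represented by coefficient functions (`c r i j m` is the
coefficient of `z^(−m)` in `[V_r^o(z)]_{i,j}`); paraunitarity is stated
coefficientwise, and the polyphase relation reads
`v (p(i,j)·K + i·P + r + m·M) = c r i j (m − n(i,j))` for all `m : ℤ`. -/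
theorem stmt6
    (N K P J L M : ℕ) (hN : 0 < N) (hNK : N ≤ K)
    (hP : P = Nat.gcd N K) (hJ : J = N / P) (hL : L = K / P) (hM : M = Nat.lcm N K)
    (p : ℤ → ℤ → ℤ)
    (hp : ∀ i j : ℤ, 0 ≤ p i j ∧ p i j < (J : ℤ) ∧ j ≡ p i j * (L : ℤ) + i [ZMOD (J : ℤ)])
    (nn : ℤ → ℤ → ℤ)
    (hnn : ∀ i j : ℤ, nn i j = (p i 0 + p 0 j - p i j) / (J : ℤ))
    -- the entries of the matrices V_r^o(z), as coefficient functions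
    (c : Fin P → Fin L → Fin J → ℤ → ℂ)
    (hcfin : ∀ (r : Fin P) (i : Fin L) (j : Fin J), (Function.support (c r i j)).Finite)
    -- paraunitarity with constant 1/N of each V_r^o(z)
    (hpara : ∀ (r : Fin P) (j j' : Fin J) (t : ℤ),
        ∑ i : Fin L, ∑' m : ℤ, (starRingEnd ℂ) (c r i j m) * c r i j' (t + m)
          = if j = j' ∧ t = 0 then 1 / (N : ℂ) else 0)
    (v : ℤ → ℂ)
    -- the polyphase components of v are z^{−n(i,j)}·[V_r^o(z)]_{i,j}
    (hv : ∀ (r : Fin P) (i : Fin L) (j : Fin J) (m : ℤ),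
        v (p (i : ℤ) (j : ℤ) * K + (i : ℤ) * P + (r : ℤ) + m * M)
          = c r i j (m - nn (i : ℤ) (j : ℤ))) :
    -- the Weyl–Heisenberg set Φ generated by v is orthonormal
    ∀ (k l : Fin N) (i j : ℤ),
      ∑' n : ℤ,
        (starRingEnd ℂ)
            (v (n - i * K) *
              Complex.exp (2 * Real.pi * Complex.I * ((k : ℕ) : ℂ) * ((n - i * (K : ℤ) : ℤ) : ℂ) / N)) *
          (v (n - j * K) *
            Complex.exp (2 * Real.pi * Complex.I * ((l : ℕ) : ℂ) * ((n - j * (K : ℤ) : ℤ) : ℂ) / N))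
        = if k = l ∧ i = j then 1 else 0 := by
  have hc (r : Fin P) (i : Fin L) (j : Fin J) : Summable fun m => ‖c r i j m‖ ^ 2 :=
    summable_of_hasFiniteSupport ((hcfin r i j).subset fun m hm h => hm (by simp [h]))
  exact fun k l i j => (stmt6_general N K P J L M hN (hN.trans_le hNK) hP hJ hL hM p
    (fun i j => (hp i j).2.2) nn hnn c hc hpara v hv k l i j).tsum_eq
end

section
/- Let N, K be positive integers with K ≥ N, and let v : ℤ → ℝ be finitely supported. The Weyl–Heisenberg set Φ = {φ_{k,i}} with φ_{k,i}[n] = v[n−iK]·exp(2πi k(n−iK)/N), k ∈ {0,…,N−1}, i ∈ ℤ, is orthonormal if and only if ∑_{i∈ℤ} v[n+iN]·v[n+iN+jK] = (1/N)·δ[j] for every n ∈ {0,…,N−1} and every j ∈ ℤ. -/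
open Complex

/-!
Substituting `n = m + iK`, the inner product of `φ_{k,i}` and `φ_{l,j}` is, up to a unimodular
factor, `∑ₘ conj v[m] v[m + dK] exp(-2πi (k - l) m / N)` with `d = i - j`. The exponential only
depends on `m` modulo `N`, so this is the discrete Fourier transform on `ℤ/N`, at frequency `k - l`,
of the correlation `conj v[m] v[m + dK]` summed over residue classes. Orthonormality says that this
transform is `δ[d]` times the indicator of `0`, that is, that the folded correlation is the constant
`δ[d] / N`.
-/

open ZMod ComplexConjugate

section Periodization

variable {N : ℕ} {E : Type*}

/-- The periodization `a ↦ ∑_q f(a + qN)` of a function on `ℤ`, as a function on `ℤ/N`; a residue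
class is represented by its element in `{0, …, N - 1}`. -/
noncomputable def periodization [AddCommMonoid E] [TopologicalSpace E] (N : ℕ) (f : ℤ → E)
    (a : ZMod N) : E :=
  ∑' q : ℤ, f (a.val + q * N)

lemma periodization_natCast_fin [AddCommMonoid E] [TopologicalSpace E] (f : ℤ → E) (r : Fin N) :
    periodization N f (r : ℕ) = ∑' q : ℤ, f (r + q * N) := by
  rw [periodization, val_cast_of_lt r.isLt]

variable [NeZero N]

lemma tsum_int_eq_sum_periodization [AddCommGroup E] [UniformSpace E] [IsUniformAddGroup E]
    [CompleteSpace E] [T0Space E] {f : ℤ → E} (hf : Summable f) :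
    ∑' m : ℤ, f m = ∑ a : ZMod N, periodization N f a := by
  let e : Fin N × ℤ ≃ ℤ := (Equiv.prodComm _ _).trans (Int.divModEquiv N).symm
  have he (p : Fin N × ℤ) : e p = p.1 + p.2 * N := by simp [e, add_comm]
  have hfe : Summable fun p ↦ f (e p) := e.summable_iff.mpr hf
  calc ∑' m : ℤ, f m
      = ∑ r : Fin N, ∑' q : ℤ, f (r + q * N) := by
        rw [← e.tsum_eq f, hfe.tsum_prod, tsum_fintype]
        simp only [he]
    _ = ∑ a : ZMod N, periodization N f a := by
        obtain _ | N := N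
        · exact absurd rfl (NeZero.ne 0)
        · rfl -- `ZMod (N + 1)` unfolds to `Fin (N + 1)`

lemma dft_periodization [NormedAddCommGroup E] [NormedSpace ℂ E] [CompleteSpace E] {f : ℤ → E}
    (hf : Summable fun m ↦ ‖f m‖) (k : ZMod N) :
    𝓕 (periodization N f) k = ∑' m : ℤ, stdAddChar (-(m * k) : ZMod N) • f m := by
  have hsum : Summable fun m : ℤ ↦ stdAddChar (-(m * k) : ZMod N) • f m :=
    .of_norm (by simpa only [norm_smul, AddChar.norm_apply, one_mul] using hf)
  rw [tsum_int_eq_sum_periodization (N := N) hsum, dft_apply]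
  refine Finset.sum_congr rfl fun a _ ↦ ?_
  simp [periodization, tsum_const_smul'']

end Periodization

lemma dft_eq_single_zero_iff {N : ℕ} [NeZero N] {E : Type*} [AddCommGroup E] [Module ℂ E]
    {Φ : ZMod N → E} {c : E} :
    𝓕 Φ = Pi.single 0 c ↔ ∀ a, Φ a = (N : ℂ)⁻¹ • c := by
  have hinv (a : ZMod N) : 𝓕⁻ (Pi.single 0 c) a = (N : ℂ)⁻¹ • c := by
    simp [invDFT_apply, Pi.single_apply]
  rw [← LinearEquiv.eq_symm_apply, funext_iff]
  simp only [hinv]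

lemma forall_zmod_iff_forall_fin {N : ℕ} [NeZero N] {P : ZMod N → Prop} :
    (∀ a, P a) ↔ ∀ n : Fin N, P (n : ℕ) :=
  ⟨fun h n ↦ h n, fun h a ↦ by simpa using h ⟨a.val, a.val_lt⟩⟩

lemma summable_norm_conj_mul_translate {G 𝕜 : Type*} [AddGroup G] [RCLike 𝕜] {v : G → 𝕜}
    (hv : Summable fun n ↦ ‖v n‖ ^ 2) (s : G) :
    Summable fun m ↦ ‖conj (v m) * v (m + s)‖ := by
  have hbound : Summable fun m ↦ ‖v m‖ ^ 2 + ‖v (m + s)‖ ^ 2 :=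
    hv.add (hv.comp_injective (add_left_injective s))
  refine hbound.of_nonneg_of_le (fun m ↦ norm_nonneg _) fun m ↦ ?_
  rw [norm_mul, RCLike.norm_conj]
  nlinarith [two_mul_le_add_sq ‖v m‖ ‖v (m + s)‖, norm_nonneg (v m), norm_nonneg (v (m + s))]

/-- The correlation of `v` with its translate by `s`, summed over residue classes modulo `N`. -/
noncomputable def foldedCorr (N : ℕ) (v : ℤ → ℂ) (s : ℤ) : ZMod N → ℂ :=
  periodization N fun m ↦ conj (v m) * v (m + s)

/-- The Weyl–Heisenberg waveform `φ_{k,i}` with `N` frequencies, time step `K` and window `v`. -/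
noncomputable def waveform (N : ℕ) (K : ℤ) (v : ℤ → ℂ) (k : ℕ) (i n : ℤ) : ℂ :=
  v (n - i * K) * exp (2 * Real.pi * I * k * (n - i * K : ℤ) / N)

section Waveform

variable {N : ℕ} [NeZero N] {K : ℤ} {v : ℤ → ℂ}

lemma waveform_eq_mul_stdAddChar (k : ℕ) (i n : ℤ) :
    waveform N K v k i n = v (n - i * K) * stdAddChar (k * (n - i * K : ℤ) : ZMod N) := by
  have h := stdAddChar_coe (N := N) (k * (n - i * K))
  push_cast at h
  rw [waveform]
  push_cast
  rw [h, mul_assoc _ (k : ℂ)]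

lemma conj_waveform_mul_waveform (k l : ℕ) (i j m : ℤ) :
    conj (waveform N K v k i (m + i * K)) * waveform N K v l j (m + i * K) =
      stdAddChar (l * ((i - j) * K : ℤ) : ZMod N) *
        (stdAddChar (-(m * (k - l)) : ZMod N) * (conj (v m) * v (m + (i - j) * K))) := by
  have hphase : (stdAddChar (-(k * m) : ZMod N) : ℂ) *
        stdAddChar (l * (m + (i - j) * K : ℤ) : ZMod N) =
      stdAddChar (l * ((i - j) * K : ℤ) : ZMod N) * stdAddChar (-(m * (k - l)) : ZMod N) := by
    rw [← AddChar.map_add_eq_mul, ← AddChar.map_add_eq_mul]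
    push_cast
    ring_nf
  have hshift : m + i * K - j * K = m + (i - j) * K := by ring
  rw [waveform_eq_mul_stdAddChar, waveform_eq_mul_stdAddChar, add_sub_cancel_right, hshift, map_mul,
    ← AddChar.map_neg_eq_conj]
  linear_combination (conj (v m) * v (m + (i - j) * K)) * hphase

lemma tsum_conj_waveform_mul_waveform (hv : Summable fun n ↦ ‖v n‖ ^ 2) (k l : ℕ) (i j : ℤ) :
    ∑' n : ℤ, conj (waveform N K v k i n) * waveform N K v l j n =
      stdAddChar (l * ((i - j) * K : ℤ) : ZMod N) * 𝓕 (foldedCorr N v ((i - j) * K)) (k - l) := by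
  rw [← (Equiv.addRight (i * K)).tsum_eq, foldedCorr,
    dft_periodization (summable_norm_conj_mul_translate hv _), ← tsum_mul_left]
  simp only [Equiv.coe_addRight, conj_waveform_mul_waveform, smul_eq_mul]

lemma orthonormal_waveform_iff_dft_foldedCorr (hv : Summable fun n ↦ ‖v n‖ ^ 2) :
    (∀ (k l : Fin N) (i j : ℤ), ∑' n : ℤ, conj (waveform N K v k i n) * waveform N K v l j n =
        if k = l ∧ i = j then 1 else 0) ↔
      ∀ d : ℤ, 𝓕 (foldedCorr N v (d * K)) = Pi.single 0 (if d = 0 then 1 else 0) := by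
  simp only [tsum_conj_waveform_mul_waveform hv]
  constructor
  · intro h d
    funext a
    -- At `l = 0` the unimodular factor is trivial and `k` still runs over all frequencies.
    have ha := h ⟨a.val, a.val_lt⟩ 0 d 0
    simpa [Fin.ext_iff, Pi.single_apply, ite_and] using ha
  · intro h k l i j
    have hkl : (k : ZMod N) - (l : ZMod N) = 0 ↔ k = l := by
      rw [sub_eq_zero, natCast_eq_natCast_iff', Nat.mod_eq_of_lt k.isLt, Nat.mod_eq_of_lt l.isLt,
        Fin.ext_iff]
    rw [h, Pi.single_apply]
    by_cases hij : i = j <;> simp [hkl, hij, sub_eq_zero]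

end Waveform

theorem stmt7_general (N : ℕ) [NeZero N] (K : ℤ) {v : ℤ → ℂ} (hv : Summable fun n ↦ ‖v n‖ ^ 2) :
    (∀ (k l : Fin N) (i j : ℤ), ∑' n : ℤ, conj (waveform N K v k i n) * waveform N K v l j n =
        if k = l ∧ i = j then 1 else 0) ↔
      ∀ (n : Fin N) (j : ℤ), ∑' i : ℤ, conj (v (n + i * N)) * v (n + i * N + j * K) =
        if j = 0 then 1 / (N : ℂ) else 0 := by
  rw [orthonormal_waveform_iff_dft_foldedCorr hv, forall_comm (α := Fin N)]
  refine forall_congr' fun j ↦ ?_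
  rw [dft_eq_single_zero_iff, forall_zmod_iff_forall_fin]
  simp only [foldedCorr, periodization_natCast_fin, smul_eq_mul, mul_ite, mul_one, mul_zero,
    one_div]

/-- For a finitely supported real-valued `v : ℤ → ℝ`, the
Weyl–Heisenberg set `Φ = {φ_{k,i}[n] = v[n−iK]·exp(2πi k(n−iK)/N)}`
(`k ∈ {0,…,N−1}`, `i ∈ ℤ`) is orthonormal if and only if
`∑_{i∈ℤ} v[n+iN]·v[n+iN+jK] = (1/N)·δ[j]` for every `n ∈ {0,…,N−1}` and every
`j ∈ ℤ`. -/
theorem stmt7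
    (N K : ℕ) (hN : 0 < N) (hNK : N ≤ K)
    (v : ℤ → ℝ) (hv : (Function.support v).Finite) :
    (∀ (k l : Fin N) (i j : ℤ),
        ∑' n : ℤ,
          (starRingEnd ℂ)
              ((v (n - i * K) : ℂ) *
                Complex.exp (2 * Real.pi * Complex.I * ((k : ℕ) : ℂ) * ((n - i * (K : ℤ) : ℤ) : ℂ) / N)) *
            ((v (n - j * K) : ℂ) *
              Complex.exp (2 * Real.pi * Complex.I * ((l : ℕ) : ℂ) * ((n - j * (K : ℤ) : ℤ) : ℂ) / N))
          = if k = l ∧ i = j then 1 else 0)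
    ↔
    (∀ (n : Fin N) (j : ℤ),
        ∑' i : ℤ, v ((n : ℤ) + i * N) * v ((n : ℤ) + i * N + j * K)
          = if j = 0 then 1 / (N : ℝ) else 0) := by
  have : NeZero N := .of_pos hN
  have hv' : Summable fun n ↦ ‖(v n : ℂ)‖ ^ 2 :=
    summable_of_hasFiniteSupport (hv.subset fun n hn ↦ by simpa using hn)
  refine (stmt7_general N K hv').trans (forall₂_congr fun n j ↦ ?_)
  simp [← ofReal_inj, apply_ite ofReal, ofReal_tsum]
end

section
/- Let N, K be positive integers with N ≤ K ≤ 2N, and let v : ℤ → ℝ be supported on {0,…,K−1}. Then the conditions ∑_{i∈ℤ} v[n+iN]·v[n+iN+jK] = (1/N)·δ[j] for all n ∈ {0,…,N−1} and j ∈ ℤ hold if and only if v[n]² + v[n+N]² = 1/N for 0 ≤ n ≤ K−N−1 and v[n]² = 1/N for K−N ≤ n ≤ N−1. -/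
/-!
The support of `v` has length at most `K`, so a shift by a nonzero multiple of `K` moves it off
itself and all correlations with `j ≠ 0` vanish identically. If `rN ≤ K ≤ (r + 1)N`, the correlation
with `j = 0` at `n ∈ {0,…,N−1}` is the sum of the squares `v[n + iN]²` with `0 ≤ i ≤ r`. The term
`i = r` leaves the support exactly when `n ≥ K − rN`, which splits the condition into two ranges.
-/

open Finset Function

lemma mul_shift_eq_zero {R : Type*} [MulZeroClass R] {v : ℤ → R} {a b d : ℤ}
    (hv : support v ⊆ Set.Ico a b) (hd : b - a ≤ |d|) (m : ℤ) : v m * v (m + d) = 0 := by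
  by_contra h
  have hm : m ∈ Set.Ico a b := hv (left_ne_zero_of_mul h)
  have hmd : m + d ∈ Set.Ico a b := hv (right_ne_zero_of_mul h)
  have : |d| < b - a := abs_lt.2 ⟨by linarith [hm.2, hmd.1], by linarith [hm.1, hmd.2]⟩
  exact this.not_ge hd

lemma tsum_add_mul_eq_sum_range {M : Type*} [AddCommMonoid M] [TopologicalSpace M] {f : ℤ → M}
    {N n : ℤ} {r : ℕ} (hf : support f ⊆ Set.Ico 0 (r * N)) (hn₀ : 0 ≤ n) (hn : n < N) :
    ∑' i : ℤ, f (n + i * N) = ∑ i ∈ range r, f (n + i * N) := by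
  have hN : 0 < N := hn₀.trans_lt hn
  rw [tsum_eq_sum (s := (range r).map Nat.castEmbedding), sum_map]
  · rfl
  · intro i hi
    contrapose! hi
    obtain ⟨h₀, hr⟩ := hf hi
    have hi₀ : 0 < i + 1 := pos_of_mul_pos_left (by linarith : 0 < (i + 1) * N) hN.le
    have hir : i < r := lt_of_mul_lt_mul_right (by linarith) hN.le
    exact mem_map.2 ⟨i.toNat, mem_range.2 (by omega), Int.toNat_of_nonneg (by omega)⟩

lemma sum_range_succ_sq_eq_sum_range {R : Type*} [Semiring R] {v : ℤ → R} {N K n : ℤ} {r : ℕ}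
    (hv : support v ⊆ Set.Ico 0 K) (hn : K - r * N ≤ n) :
    ∑ i ∈ range (r + 1), v (n + i * N) ^ 2 = ∑ i ∈ range r, v (n + i * N) ^ 2 := by
  have hlast : v (n + r * N) = 0 := notMem_support.1 fun h ↦ by linarith [(hv h).2]
  rw [sum_range_succ, hlast, zero_pow two_ne_zero, add_zero]

section Correlation

variable {R : Type*} [Semiring R] [TopologicalSpace R] {v : ℤ → R} {N K : ℤ} {r : ℕ}

lemma tsum_mul_shift_eq_ite (hv : support v ⊆ Set.Ico 0 K) (hK : K ≤ r * N) {n : ℤ}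
    (hn₀ : 0 ≤ n) (hn : n < N) (j : ℤ) :
    ∑' i : ℤ, v (n + i * N) * v (n + i * N + j * K) =
      if j = 0 then ∑ i ∈ range r, v (n + i * N) ^ 2 else 0 := by
  split_ifs with hj
  · have hsq : support (fun m ↦ v m ^ 2) ⊆ Set.Ico 0 (r * N) := fun m hm ↦
      Set.Ico_subset_Ico_right hK (hv (ne_zero_pow two_ne_zero hm))
    simpa only [hj, zero_mul, add_zero, ← sq] using tsum_add_mul_eq_sum_range hsq hn₀ hn
  · have hshift : K - 0 ≤ |j * K| := calc
      K - 0 = K := sub_zero K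
      _ ≤ |K| := le_abs_self K
      _ ≤ |j| * |K| := le_mul_of_one_le_left (abs_nonneg K) (Int.one_le_abs hj)
      _ = |j * K| := (abs_mul j K).symm
    simp only [mul_shift_eq_zero hv hshift, tsum_zero]

theorem stmt8_general (hrK : r * N ≤ K) (hKr : K ≤ (r + 1) * N)
    (hv : support v ⊆ Set.Ico 0 K) (c : R) :
    (∀ n : ℤ, 0 ≤ n → n < N → ∀ j : ℤ,
        ∑' i : ℤ, v (n + i * N) * v (n + i * N + j * K) = if j = 0 then c else 0) ↔
      (∀ n : ℤ, 0 ≤ n → n < K - r * N → ∑ i ∈ range (r + 1), v (n + i * N) ^ 2 = c) ∧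
        ∀ n : ℤ, K - r * N ≤ n → n < N → ∑ i ∈ range r, v (n + i * N) ^ 2 = c := by
  have hcorr {n : ℤ} (hn₀ : 0 ≤ n) (hn : n < N) (j : ℤ) :=
    tsum_mul_shift_eq_ite (r := r + 1) hv (mod_cast hKr) hn₀ hn j
  constructor
  · intro h
    have hsum (n : ℤ) (hn₀ : 0 ≤ n) (hn : n < N) : ∑ i ∈ range (r + 1), v (n + i * N) ^ 2 = c := by
      simpa only [hcorr hn₀ hn, if_true] using h n hn₀ hn 0
    exact ⟨fun n hn₀ hn ↦ hsum n hn₀ (by linarith),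
      fun n hge hn ↦ (sum_range_succ_sq_eq_sum_range hv hge).symm.trans (hsum n (by linarith) hn)⟩
  · rintro ⟨hlow, hhigh⟩ n hn₀ hn j
    have hsum : ∑ i ∈ range (r + 1), v (n + i * N) ^ 2 = c := by
      rcases lt_or_ge n (K - r * N) with hlt | hge
      · exact hlow n hn₀ hlt
      · exact (sum_range_succ_sq_eq_sum_range hv hge).trans (hhigh n hge hn)
    rw [hcorr hn₀ hn, hsum]

end Correlation

/-- Let `N ≤ K ≤ 2N` and let `v : ℤ → ℝ` be supported on
`{0,…,K−1}`.  Then `∑_{i∈ℤ} v[n+iN]·v[n+iN+jK] = (1/N)·δ[j]` for all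
`n ∈ {0,…,N−1}` and `j ∈ ℤ` if and only if
`v[n]² + v[n+N]² = 1/N` for `0 ≤ n ≤ K−N−1` and `v[n]² = 1/N` for
`K−N ≤ n ≤ N−1`. -/
theorem stmt8
    (N K : ℕ) (hN : 0 < N) (hNK : N ≤ K) (hK2N : K ≤ 2 * N)
    (v : ℤ → ℝ) (hv : ∀ n : ℤ, (n < 0 ∨ (K : ℤ) ≤ n) → v n = 0) :
    (∀ n : ℤ, 0 ≤ n → n ≤ (N : ℤ) - 1 → ∀ j : ℤ,
        ∑' i : ℤ, v (n + i * N) * v (n + i * N + j * K)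
          = if j = 0 then 1 / (N : ℝ) else 0)
    ↔
    ((∀ n : ℤ, 0 ≤ n → n ≤ (K : ℤ) - N - 1 → v n ^ 2 + v (n + N) ^ 2 = 1 / (N : ℝ)) ∧
      (∀ n : ℤ, (K : ℤ) - N ≤ n → n ≤ (N : ℤ) - 1 → v n ^ 2 = 1 / (N : ℝ))) := by
  have hsupp : support v ⊆ Set.Ico 0 (K : ℤ) := support_subset_iff'.2 fun n hn ↦ hv n (by grind)
  simpa [sum_range_succ, Int.le_sub_one_iff] using
    stmt8_general (N := N) (r := 1) (by grind) (by grind) hsupp (1 / (N : ℝ))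
end

section
/- Let N, K be positive integers with N ≤ K ≤ 2N, and let α_0, …, α_{K−N−1} be arbitrary real numbers. Define v : ℤ → ℝ by v[n] = (1/√N)·cos(α_n) for 0 ≤ n ≤ K−N−1, v[n] = 1/√N for K−N ≤ n ≤ N−1, v[n] = (1/√N)·sin(α_{n−N}) for N ≤ n ≤ K−1, and v[n] = 0 otherwise. Then the Weyl–Heisenberg set Φ = {φ_{k,i}} with φ_{k,i}[n] = v[n−iK]·exp(2πi k(n−iK)/N), k ∈ {0,…,N−1}, i ∈ ℤ, is orthonormal. -/
/-!
Shifting the summation variable and grouping `ℤ` into residue classes modulo `N` writes the inner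
product of two waveforms as a phase times a discrete Fourier transform over `ZMod N` of the
autocorrelation of the window at lag `(i - j) * K`, folded modulo `N`. So the waveforms are
orthonormal as soon as this folded autocorrelation is constantly `1 / N` at lag `0` and vanishes at
the other multiples of `K`. A window supported in `[0, K)` is disjoint from its translates by
nonzero multiples of `K`; and since `K ≤ 2 * N`, a residue class modulo `N` meets `[0, K)` in at
most two points, where the squares of the window add up to `1 / N` by `cos² + sin² = 1`.
-/

open Complex

section WeylHeisenberg

variable {N : ℕ} {K : ℤ} {v : ℤ → ℂ}

/-- The waveform `φ_{k,i}` of the Weyl–Heisenberg set with `N` modulations, time step `K` and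
window `v`. Modulation is by the standard additive character of `ZMod N`, so that the frequency `k`
is naturally a residue class. -/
noncomputable def weylHeisenbergWaveform (N : ℕ) [NeZero N] (K : ℤ) (v : ℤ → ℂ) (k : ZMod N)
    (i n : ℤ) : ℂ :=
  v (n - i * K) * ZMod.stdAddChar (k * ((n - i * K : ℤ) : ZMod N))

/-- The autocorrelation of `v` at lag `d`, restricted to the residue class `r` modulo `N`. These
numbers, as `r` varies, are what the inner products of waveforms depend on. -/
noncomputable def foldedAutocorrelation (N : ℕ) (v : ℤ → ℂ) (d : ℤ) (r : ZMod N) : ℂ :=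
  ∑' n : ((↑) : ℤ → ZMod N) ⁻¹' {r}, starRingEnd ℂ (v n) * v (n + d)

lemma weylHeisenbergWaveform_natCast [NeZero N] (k : ℕ) (i n : ℤ) :
    weylHeisenbergWaveform N K v k i n =
      v (n - i * K) * exp (2 * Real.pi * I * (k : ℂ) * ((n - i * K : ℤ) : ℂ) / N) := by
  have h := ZMod.stdAddChar_coe (N := N) (k * (n - i * K))
  rw [Int.cast_mul, Int.cast_natCast, Int.cast_mul, Int.cast_natCast, ← mul_assoc] at h
  rw [weylHeisenbergWaveform, h]

lemma summable_conj_mul_translate (hv : Summable fun n ↦ ‖v n‖ ^ 2) (d : ℤ) :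
    Summable fun n ↦ ‖starRingEnd ℂ (v n) * v (n + d)‖ := by
  have hvd : Summable fun n ↦ ‖v (n + d)‖ ^ 2 := (Equiv.addRight d).summable_iff.mpr hv
  refine (hv.add hvd).of_nonneg_of_le (fun n ↦ norm_nonneg _) fun n ↦ ?_
  rw [norm_mul, RCLike.norm_conj]
  nlinarith [two_mul_le_add_sq ‖v n‖ ‖v (n + d)‖, norm_nonneg (v n), norm_nonneg (v (n + d))]

lemma tsum_conj_mul_translate_mul_comp_intCast [NeZero N] (hv : Summable fun n ↦ ‖v n‖ ^ 2)
    (d : ℤ) (g : ZMod N → ℂ) :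
    ∑' n : ℤ, starRingEnd ℂ (v n) * v (n + d) * g n =
      ∑ r, foldedAutocorrelation N v d r * g r := by
  have hsum : Summable fun n : ℤ ↦ starRingEnd ℂ (v n) * v (n + d) * g n := by
    refine .of_norm_bounded ((summable_conj_mul_translate hv d).mul_right (∑ r, ‖g r‖)) fun n ↦ ?_
    rw [norm_mul]
    gcongr
    exact Finset.single_le_sum (f := fun r ↦ ‖g r‖) (fun r _ ↦ norm_nonneg _) (Finset.mem_univ _)
  rw [← (hsum.hasSum.tsum_fiberwise ((↑) : ℤ → ZMod N)).tsum_eq, tsum_fintype]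
  refine Finset.sum_congr rfl fun r _ ↦ ?_
  rw [foldedAutocorrelation, ← tsum_mul_right]
  exact tsum_congr fun n ↦ congrArg _ (congrArg g n.2)

lemma tsum_conj_weylHeisenbergWaveform_mul [NeZero N] (hv : Summable fun n ↦ ‖v n‖ ^ 2)
    (k l : ZMod N) (i j : ℤ) :
    ∑' n : ℤ, starRingEnd ℂ (weylHeisenbergWaveform N K v k i n) *
        weylHeisenbergWaveform N K v l j n =
      ZMod.stdAddChar (l * (((i - j) * K : ℤ) : ZMod N)) *
        ∑ r, foldedAutocorrelation N v ((i - j) * K) r * ZMod.stdAddChar (r * (l - k)) := by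
  rw [← tsum_conj_mul_translate_mul_comp_intCast hv ((i - j) * K)
      fun r ↦ ZMod.stdAddChar (r * (l - k)),
    ← tsum_mul_left, ← (Equiv.addRight (i * K)).tsum_eq]
  refine tsum_congr fun n ↦ ?_
  have hi : n + i * K - i * K = n := by ring
  have hj : n + i * K - j * K = n + (i - j) * K := by ring
  have hphase : starRingEnd ℂ (ZMod.stdAddChar (k * (n : ZMod N))) *
        ZMod.stdAddChar (l * ((n + (i - j) * K : ℤ) : ZMod N)) =
      ZMod.stdAddChar (l * (((i - j) * K : ℤ) : ZMod N)) *
        ZMod.stdAddChar ((n : ZMod N) * (l - k)) := by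
    rw [← AddChar.map_neg_eq_conj, ← AddChar.map_add_eq_mul, ← AddChar.map_add_eq_mul]
    push_cast
    ring_nf
  simp only [weylHeisenbergWaveform, Equiv.coe_addRight, hi, hj, map_mul]
  linear_combination starRingEnd ℂ (v n) * v (n + (i - j) * K) * hphase

theorem tsum_conj_weylHeisenbergWaveform_mul_eq_ite [NeZero N]
    (hv : Summable fun n ↦ ‖v n‖ ^ 2)
    (hfold : ∀ (p : ℤ) (r : ZMod N),
      foldedAutocorrelation N v (p * K) r = if p = 0 then 1 / (N : ℂ) else 0)
    (k l : ZMod N) (i j : ℤ) :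
    ∑' n : ℤ, starRingEnd ℂ (weylHeisenbergWaveform N K v k i n) *
        weylHeisenbergWaveform N K v l j n = if k = l ∧ i = j then 1 else 0 := by
  simp only [tsum_conj_weylHeisenbergWaveform_mul hv, hfold, ← Finset.mul_sum,
    AddChar.sum_mulShift _ (ZMod.isPrimitive_stdAddChar N), ZMod.card, sub_eq_zero]
  obtain rfl | hij := eq_or_ne i j
  · obtain rfl | hkl := eq_or_ne k l
    · simp [NeZero.ne N]
    · simp [hkl, hkl.symm]
  · simp [hij]

lemma foldedAutocorrelation_mul_eq_zero (hv : v.support ⊆ Set.Ico 0 K) {p : ℤ} (hp : p ≠ 0)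
    (r : ZMod N) : foldedAutocorrelation N v (p * K) r = 0 := by
  refine (tsum_congr fun n ↦ ?_).trans tsum_zero
  by_contra hne
  obtain ⟨hn, hnp⟩ := mul_ne_zero_iff.mp hne
  obtain ⟨hn₀, hnK⟩ := hv ((map_ne_zero _).mp hn)
  obtain ⟨hnp₀, hnpK⟩ := hv hnp
  have hquot := Int.add_mul_ediv_right n p (hn₀.trans_lt hnK).ne'
  rw [Int.ediv_eq_zero_of_lt hn₀ hnK, Int.ediv_eq_zero_of_lt hnp₀ hnpK, zero_add] at hquot
  exact hp hquot.symm

lemma foldedAutocorrelation_zero_natCast (hv : v.support ⊆ Set.Ico 0 (2 * N : ℤ)) {m : ℕ}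
    (hm : m < N) :
    foldedAutocorrelation N v 0 (m : ZMod N) = (‖v m‖ : ℂ) ^ 2 + (‖v (m + N)‖ : ℂ) ^ 2 := by
  have hfiber : ∀ n ∉ ({(m : ℤ), (m : ℤ) + N} : Finset ℤ),
      (((↑) : ℤ → ZMod N) ⁻¹' {(m : ZMod N)}).indicator
        (fun n ↦ starRingEnd ℂ (v n) * v n) n = 0 := by
    intro n hn
    refine Set.indicator_apply_eq_zero.mpr fun hnm ↦ mul_eq_zero_of_right _ ?_
    by_contra hvn
    obtain ⟨hn₀, hn₁⟩ := hv hvn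
    obtain ⟨q, hq⟩ := (ZMod.intCast_eq_intCast_iff_dvd_sub (m : ℤ) n N).mp (by simpa using hnm.symm)
    have hq₀ : -1 < q := by nlinarith
    have hq₁ : q < 2 := by nlinarith
    simp only [Finset.mem_insert, Finset.mem_singleton, not_or] at hn
    interval_cases q <;> omega
  simp only [foldedAutocorrelation, add_zero]
  rw [tsum_subtype (((↑) : ℤ → ZMod N) ⁻¹' {(m : ZMod N)}) fun n ↦ starRingEnd ℂ (v n) * v n,
    tsum_eq_sum hfiber, Finset.sum_pair (by omega), Set.indicator_of_mem (by simp),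
    Set.indicator_of_mem (by simp), conj_mul', conj_mul']

end WeylHeisenberg

section CosineTaperedWindow

variable {N K : ℕ}

/-- The window of length `K` that is flat with cosine and sine tapers of length `K - N` and angles
`α`, extended by zero to `ℤ`. -/
noncomputable def cosineTaperedWindow (N K : ℕ) (α : ℤ → ℝ) (n : ℤ) : ℝ :=
  if 0 ≤ n ∧ n ≤ (K : ℤ) - N - 1 then (1 / Real.sqrt N) * Real.cos (α n)
  else if (K : ℤ) - N ≤ n ∧ n ≤ (N : ℤ) - 1 then 1 / Real.sqrt N
  else if (N : ℤ) ≤ n ∧ n ≤ (K : ℤ) - 1 then (1 / Real.sqrt N) * Real.sin (α (n - N))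
  else 0

lemma support_cosineTaperedWindow_subset (hNK : N ≤ K) (α : ℤ → ℝ) :
    (cosineTaperedWindow N K α).support ⊆ Set.Ico 0 (K : ℤ) := by
  refine Function.support_subset_iff'.mpr fun n hn ↦ ?_
  rw [Set.mem_Ico] at hn
  rw [cosineTaperedWindow, if_neg (by omega), if_neg (by omega), if_neg (by omega)]

lemma cosineTaperedWindow_sq_add_sq (hNK : N ≤ K) (hK2N : K ≤ 2 * N) (α : ℤ → ℝ) {m : ℕ}
    (hm : m < N) :
    cosineTaperedWindow N K α m ^ 2 + cosineTaperedWindow N K α (m + N) ^ 2 = 1 / N := by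
  have hsq : (1 / Real.sqrt N) ^ 2 = 1 / (N : ℝ) := by
    rw [div_pow, Real.sq_sqrt N.cast_nonneg, one_pow]
  by_cases htaper : m + N < K
  · have hcos : cosineTaperedWindow N K α m = 1 / Real.sqrt N * Real.cos (α m) :=
      if_pos (by omega)
    have hsin : cosineTaperedWindow N K α (m + N) = 1 / Real.sqrt N * Real.sin (α m) := by
      rw [cosineTaperedWindow, if_neg (by omega), if_neg (by omega), if_pos (by omega),
        add_sub_cancel_right]
    rw [hcos, hsin, mul_pow, mul_pow, ← mul_add, Real.cos_sq_add_sin_sq, hsq, mul_one]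
  · have hflat : cosineTaperedWindow N K α m = 1 / Real.sqrt N := by
      rw [cosineTaperedWindow, if_neg (by omega), if_pos (by omega)]
    have hzero : cosineTaperedWindow N K α (m + N) = 0 :=
      Function.support_subset_iff'.mp (support_cosineTaperedWindow_subset hNK α) _
        (by rw [Set.mem_Ico]; omega)
    rw [hflat, hzero, hsq, zero_pow two_ne_zero, add_zero]

lemma support_ofReal_cosineTaperedWindow_subset (hNK : N ≤ K) (α : ℤ → ℝ) :
    (fun n ↦ (cosineTaperedWindow N K α n : ℂ)).support ⊆ Set.Ico 0 (K : ℤ) :=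
  (Function.support_comp_subset ofReal_zero _).trans (support_cosineTaperedWindow_subset hNK α)

lemma summable_norm_sq_cosineTaperedWindow (hNK : N ≤ K) (α : ℤ → ℝ) :
    Summable fun n ↦ ‖(cosineTaperedWindow N K α n : ℂ)‖ ^ 2 := by
  refine summable_of_hasFiniteSupport <| (Set.finite_Ico 0 (K : ℤ)).subset <|
    Function.support_subset_iff'.mpr fun n hn ↦ ?_
  rw [Function.support_subset_iff'.mp (support_cosineTaperedWindow_subset hNK α) n hn]
  simp

lemma foldedAutocorrelation_cosineTaperedWindow [NeZero N] (hNK : N ≤ K) (hK2N : K ≤ 2 * N)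
    (α : ℤ → ℝ) (p : ℤ) (r : ZMod N) :
    foldedAutocorrelation N (fun n ↦ (cosineTaperedWindow N K α n : ℂ)) (p * K) r =
      if p = 0 then 1 / (N : ℂ) else 0 := by
  have hsupp := support_ofReal_cosineTaperedWindow_subset hNK α
  split_ifs with hp
  · have hsupp₂ := hsupp.trans
      (Set.Ico_subset_Ico_right (show (K : ℤ) ≤ 2 * N by exact_mod_cast hK2N))
    rw [hp, zero_mul, ← ZMod.natCast_zmod_val r,
      foldedAutocorrelation_zero_natCast hsupp₂ r.val_lt]
    simp only [norm_real, ← ofReal_pow, Real.norm_eq_abs, sq_abs, ← ofReal_add,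
      cosineTaperedWindow_sq_add_sq hNK hK2N α r.val_lt]
    push_cast
    rfl
  · exact foldedAutocorrelation_mul_eq_zero hsupp hp r

end CosineTaperedWindow

/-- Let `N ≤ K ≤ 2N` and let `α_0, …, α_{K−N−1}` be arbitrary
real numbers.  Define `v[n] = (1/√N)·cos(α_n)` for `0 ≤ n ≤ K−N−1`,
`v[n] = 1/√N` for `K−N ≤ n ≤ N−1`, `v[n] = (1/√N)·sin(α_{n−N})` for
`N ≤ n ≤ K−1`, and `v[n] = 0` otherwise.  Then the Weyl–Heisenberg set
`Φ = {φ_{k,i}[n] = v[n−iK]·exp(2πi k(n−iK)/N)}` is orthonormal. -/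
theorem stmt9
    (N K : ℕ) (hN : 0 < N) (hNK : N ≤ K) (hK2N : K ≤ 2 * N)
    (α : ℤ → ℝ) (v : ℤ → ℝ)
    (hv : ∀ n : ℤ,
        v n =
          if 0 ≤ n ∧ n ≤ (K : ℤ) - N - 1 then (1 / Real.sqrt N) * Real.cos (α n)
          else if (K : ℤ) - N ≤ n ∧ n ≤ (N : ℤ) - 1 then 1 / Real.sqrt N
          else if (N : ℤ) ≤ n ∧ n ≤ (K : ℤ) - 1 then (1 / Real.sqrt N) * Real.sin (α (n - N))
          else 0) :
    ∀ (k l : Fin N) (i j : ℤ),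
      ∑' n : ℤ,
        (starRingEnd ℂ)
            ((v (n - i * K) : ℂ) *
              Complex.exp (2 * Real.pi * Complex.I * ((k : ℕ) : ℂ) * ((n - i * (K : ℤ) : ℤ) : ℂ) / N)) *
          ((v (n - j * K) : ℂ) *
            Complex.exp (2 * Real.pi * Complex.I * ((l : ℕ) : ℂ) * ((n - j * (K : ℤ) : ℤ) : ℂ) / N))
        = if k = l ∧ i = j then 1 else 0 := by
  intro k l i j
  have : NeZero N := ⟨hN.ne'⟩
  obtain rfl : v = cosineTaperedWindow N K α := funext hv
  have hcast : ((k : ℕ) : ZMod N) = ((l : ℕ) : ZMod N) ↔ k = l := by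
    rw [ZMod.natCast_eq_natCast_iff', Nat.mod_eq_of_lt k.2, Nat.mod_eq_of_lt l.2, Fin.ext_iff]
  have horth := tsum_conj_weylHeisenbergWaveform_mul_eq_ite
    (summable_norm_sq_cosineTaperedWindow hNK α)
    (foldedAutocorrelation_cosineTaperedWindow hNK hK2N α) (k : ℕ) (l : ℕ) i j
  simpa only [weylHeisenbergWaveform_natCast, hcast] using horth
end

section
/- Let N, K be positive integers with K ≥ N. Define v : ℤ → ℂ by v[n] = 1/√N for 0 ≤ n ≤ N−1 and v[n] = 0 otherwise, and define ψ_k[n] = (1/√N)·exp(2πi kn/N) for 0 ≤ n ≤ K−1 and ψ_k[n] = 0 otherwise, and φ_l[n] = v[n]·exp(2πi ln/N). Then for all k, l ∈ {0,…,N−1}, all i, j ∈ ℤ, and every integer d with 0 ≤ d ≤ K−N, if (k,i) ≠ (l,j) then ∑_{n∈ℤ} conj(ψ_k[n−iK])·φ_l[n−jK−d] = 0. -/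
/-!
Since `0 ≤ d ≤ K - N`, the delayed pulse `φ_l[· - d]` is still supported in `[0, K)`, so its
translate by `j * K` meets the receive window of block `i` only if `i = j`. In that case the window
covers the whole pulse, and as conjugation inverts roots of unity the correlation is a multiple of
the geometric sum of the `N`-th root of unity `ζ ^ (l - k)`, where `ζ = exp(2πi/N)`; it vanishes
because `k ≢ l` modulo `N` makes that root different from `1`.
-/

open Complex

section Support

open Function Set

lemma mul_sub_mul_eq_zero_of_support_subset_Ico {R : Type*} [MulZeroClass R] {f g : ℤ → R} {K : ℤ}
    (hf : support f ⊆ Ico 0 K) (hg : support g ⊆ Ico 0 K) {i j : ℤ} (hij : i ≠ j) (n : ℤ) :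
    f (n - i * K) * g (n - j * K) = 0 := by
  have mem_block {h : ℤ → R} (hh : support h ⊆ Ico 0 K) {m : ℤ} (hm : h (n - m * K) ≠ 0) :
      n ∈ Ico (m • K) ((m + 1) • K) := by
    have := hh hm
    simp only [mem_Ico, smul_eq_mul, add_mul] at this ⊢
    omega
  by_contra hne
  exact disjoint_left.mp (pairwise_disjoint_Ico_zsmul K hij)
    (mem_block hf (left_ne_zero_of_mul hne)) (mem_block hg (right_ne_zero_of_mul hne))

lemma tsum_mul_sub_eq_sum_range {R : Type*} [NonUnitalNonAssocSemiring R] [TopologicalSpace R]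
    (f : ℤ → R) {g : ℤ → R} {N : ℕ} (hg : support g ⊆ Ico 0 (N : ℤ)) (c : ℤ) :
    ∑' n : ℤ, f n * g (n - c) = ∑ m ∈ Finset.range N, f (m + c) * g m := by
  have support_subset_range : (support fun m : ℤ => f (m + c) * g m) ⊆ range ((↑) : ℕ → ℤ) :=
    fun m hm => ⟨m.toNat, Int.toNat_of_nonneg (hg (right_ne_zero_of_mul hm)).1⟩
  calc ∑' n : ℤ, f n * g (n - c)
      = ∑' m : ℤ, f (m + c) * g m := by
        simp only [← (Equiv.addRight c).tsum_eq fun n => f n * g (n - c), Equiv.coe_addRight,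
          add_sub_cancel_right]
    _ = ∑' m : ℕ, f (m + c) * g m := (Nat.cast_injective.tsum_eq support_subset_range).symm
    _ = ∑ m ∈ Finset.range N, f (m + c) * g m := tsum_eq_sum fun m hm => by
        have hgm : g m = 0 := notMem_support.mp fun h =>
          hm (Finset.mem_range.mpr (by exact_mod_cast (hg h).2))
        rw [hgm, mul_zero]

end Support

lemma geom_sum_zpow_eq_zero_of_not_dvd {F : Type*} [Field F] {ζ : F} {N : ℕ}
    (hζ : IsPrimitiveRoot ζ N) {a : ℤ} (ha : ¬ (N : ℤ) ∣ a) :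
    ∑ m ∈ Finset.range N, (ζ ^ a) ^ m = 0 := by
  have pow_card_eq_one : (ζ ^ a) ^ N = 1 := by
    rw [← zpow_natCast, zpow_comm, zpow_natCast, hζ.pow_eq_one, one_zpow]
  rw [geom_sum_eq (mt (hζ.zpow_eq_one_iff_dvd a).mp ha), pow_card_eq_one, sub_self, zero_div]

/-- The rectangular pulse of height `a` on `0 ≤ n < L`, modulated to the subcarrier
`n ↦ ζ ^ (k * n)`. With `a = 1/√N` and `ζ = exp(2πi/N)`, the case `L = K` is the demultiplexing
waveform `ψ_k` and the case `L = N` is the multiplexing waveform `φ_k`. -/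
noncomputable def rectTone {F : Type*} [Field F] (a ζ : F) (L : ℕ) (k : ℤ) : ℤ → F :=
  (Set.Ico 0 (L : ℤ)).indicator fun n => a * ζ ^ (k * n)

section RectTone

variable {F : Type*} [Field F]

lemma support_rectTone_subset (a ζ : F) (L : ℕ) (k : ℤ) :
    Function.support (rectTone a ζ L k) ⊆ Set.Ico 0 (L : ℤ) :=
  Set.support_indicator_subset

lemma conj_rectTone (a : ℂ) {ζ : ℂ} (hζ : ‖ζ‖ = 1) (L : ℕ) (k n : ℤ) :
    (starRingEnd ℂ) (rectTone a ζ L k n) = rectTone ((starRingEnd ℂ) a) ζ⁻¹ L k n := by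
  simp only [rectTone, Set.indicator_apply, apply_ite (starRingEnd ℂ), map_mul, map_zpow₀, map_zero,
    inv_eq_conj hζ]

lemma rectTone_exp (a : ℂ) (N L : ℕ) (k n : ℤ) :
    rectTone a (exp (2 * Real.pi * I / N)) L k n =
      if 0 ≤ n ∧ n ≤ (L : ℤ) - 1 then a * exp (2 * Real.pi * I * k * n / N) else 0 := by
  have exp_zpow : exp (2 * Real.pi * I / N) ^ (k * n) = exp (2 * Real.pi * I * k * n / N) := by
    rw [← exp_int_mul]
    push_cast
    ring_nf
  simp only [rectTone, Set.indicator_apply, Set.mem_Ico, Int.le_sub_one_iff, exp_zpow]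

lemma sum_rectTone_inv_mul_rectTone_eq_zero {N K : ℕ} (hN : N ≠ 0) {ζ : F}
    (hζ : IsPrimitiveRoot ζ N) (a b : F) {k l d : ℤ} (hd : 0 ≤ d) (hdK : d ≤ (K : ℤ) - N)
    (hkl : ¬ k ≡ l [ZMOD N]) :
    ∑ m ∈ Finset.range N, rectTone a ζ⁻¹ K k (m + d) * rectTone b ζ N l m = 0 := by
  have hζ0 : ζ ≠ 0 := hζ.ne_zero hN
  have summand_eq (m : ℕ) (hm : m ∈ Finset.range N) :
      rectTone a ζ⁻¹ K k (m + d) * rectTone b ζ N l m =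
        a * b * ζ ^ (-(k * d)) * (ζ ^ (l - k)) ^ m := by
    rw [Finset.mem_range] at hm
    have hmK : (m + d : ℤ) ∈ Set.Ico 0 (K : ℤ) := ⟨by omega, by omega⟩
    have hmN : (m : ℤ) ∈ Set.Ico 0 (N : ℤ) := ⟨by omega, by omega⟩
    have exponent_eq : -(k * (m + d)) + l * m = -(k * d) + (l - k) * m := by ring
    rw [rectTone, rectTone, Set.indicator_of_mem hmK, Set.indicator_of_mem hmN, inv_zpow',
      mul_mul_mul_comm, ← zpow_add₀ hζ0, exponent_eq, zpow_add₀ hζ0, zpow_mul, zpow_natCast,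
      ← mul_assoc]
  rw [Finset.sum_congr rfl summand_eq, ← Finset.mul_sum,
    geom_sum_zpow_eq_zero_of_not_dvd hζ (mt Int.modEq_iff_dvd.mpr hkl), mul_zero]

end RectTone

theorem stmt11_general {N K : ℕ} (hN : N ≠ 0) {ζ : ℂ} (hζ : IsPrimitiveRoot ζ N) (a b : ℂ)
    {k l i j d : ℤ} (hd : 0 ≤ d) (hdK : d ≤ (K : ℤ) - N) (hne : i = j → ¬ k ≡ l [ZMOD N]) :
    ∑' n : ℤ, (starRingEnd ℂ) (rectTone a ζ K k (n - i * K)) *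
      rectTone b ζ N l (n - j * K - d) = 0 := by
  simp only [conj_rectTone a (hζ.norm'_eq_one hN)]
  obtain rfl | hij := eq_or_ne i j
  · simp only [sub_sub]
    rw [tsum_mul_sub_eq_sum_range _ (support_rectTone_subset b ζ N l),
      ← sum_rectTone_inv_mul_rectTone_eq_zero hN hζ ((starRingEnd ℂ) a) b hd hdK (hne rfl)]
    simp only [add_sub_cancel_left, add_sub_assoc]
  · have support_delayed :
        (Function.support fun n => rectTone b ζ N l (n - d)) ⊆ Set.Ico 0 (K : ℤ) := by
      intro n hn
      have := support_rectTone_subset b ζ N l hn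
      simp only [Set.mem_Ico] at this ⊢
      omega
    exact (tsum_congr (mul_sub_mul_eq_zero_of_support_subset_Ico
      (support_rectTone_subset _ _ K k) support_delayed hij)).trans tsum_zero

/-- In the zero-padding OFDM scheme with `N ≤ K`, where
`v[n] = 1/√N` for `0 ≤ n ≤ N−1` (`0` otherwise),
`ψ_k[n] = (1/√N)·exp(2πi kn/N)` for `0 ≤ n ≤ K−1` (`0` otherwise) and
`φ_l[n] = v[n]·exp(2πi ln/N)`: for all `k, l ∈ {0,…,N−1}`, all `i, j ∈ ℤ` and
every integer `d` with `0 ≤ d ≤ K−N`, if `(k,i) ≠ (l,j)` then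
`∑_{n∈ℤ} conj(ψ_k[n−iK])·φ_l[n−jK−d] = 0`. -/
theorem stmt11
    (N K : ℕ) (hN : 0 < N) (hNK : N ≤ K)
    (v : ℤ → ℂ)
    (hv : ∀ n : ℤ, v n = if 0 ≤ n ∧ n ≤ (N : ℤ) - 1 then ((1 / Real.sqrt N : ℝ) : ℂ) else 0)
    (ψ : Fin N → ℤ → ℂ)
    (hψ : ∀ (k : Fin N) (n : ℤ),
        ψ k n =
          if 0 ≤ n ∧ n ≤ (K : ℤ) - 1 then
            ((1 / Real.sqrt N : ℝ) : ℂ) *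
              Complex.exp (2 * Real.pi * Complex.I * ((k : ℕ) : ℂ) * (n : ℂ) / N)
          else 0)
    (φ : Fin N → ℤ → ℂ)
    (hφ : ∀ (l : Fin N) (n : ℤ),
        φ l n = v n * Complex.exp (2 * Real.pi * Complex.I * ((l : ℕ) : ℂ) * (n : ℂ) / N)) :
    ∀ (k l : Fin N) (i j d : ℤ), 0 ≤ d → d ≤ (K : ℤ) - N → (k, i) ≠ (l, j) →
      ∑' n : ℤ, (starRingEnd ℂ) (ψ k (n - i * K)) * φ l (n - j * K - d) = 0 := by
  intro k l i j d hd hdK hne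
  have ψ_eq (n : ℤ) :
      ψ k n = rectTone ((1 / √N : ℝ) : ℂ) (exp (2 * Real.pi * I / N)) K (k : ℕ) n := by
    rw [hψ, rectTone_exp, Int.cast_natCast]
  have φ_eq (n : ℤ) :
      φ l n = rectTone ((1 / √N : ℝ) : ℂ) (exp (2 * Real.pi * I / N)) N (l : ℕ) n := by
    rw [hφ, hv, rectTone_exp, Int.cast_natCast, ite_mul, zero_mul]
  have not_modEq (hij : i = j) : ¬ ((k : ℕ) : ℤ) ≡ (l : ℕ) [ZMOD N] := fun h =>
    hne (Prod.ext (Fin.ext ((Int.natCast_modEq_iff.mp h).eq_of_lt_of_lt k.isLt l.isLt)) hij)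
  simp only [ψ_eq, φ_eq]
  exact stmt11_general hN.ne' (isPrimitiveRoot_exp N hN.ne') _ _ hd hdK not_modEq
end

section
/- Let N, K be positive integers with K ≥ N, let M = lcm(K,N), P = gcd(N,K), J = N/P, L = K/P, and let w : ℤ → ℂ be finitely supported with polyphase components W_j(z) = ∑_{n∈ℤ} w[−j+nM]·z^{−n} for j = 0,…,M−1. Define the N×K demultiplexer polyphase matrix by [D(z)]_{k,m} = ∑_{n∈ℤ} w[−m+nK]·exp(2πi k(−m+nK)/N)·z^{−n} for 0 ≤ k ≤ N−1, 0 ≤ m ≤ K−1. Then D(z) = F_N^*·W(z), where F_N^* is the conjugate transpose of the matrix [F_N]_{m,k} = exp(2πi mk/N), and W(z) is the N×K matrix whose entry at position (iP+r, jP+r), for i ∈ {0,…,J−1}, j ∈ {0,…,L−1}, r ∈ {0,…,P−1}, equals z^{p}·W_{pK+jP+r}(z^J) where p is the unique integer in {0,…,J−1} with i ≡ pL + j (mod J), and all entries at positions (l,m) with l ≢ m (mod P) are zero. -/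
open Complex

/-!
Write `N = PJ` and `K = PL` with `J`, `L` coprime, so that `M = JK`. Fix a column `m` and an
exponent `n`. The entry of `W(z)` in row `l` contributes to `z^(-n)` exactly when `l ≡ m (mod P)`
and `J ∣ n + p`. Since `l / P ≡ pL + m / P (mod J)` and `L` is invertible modulo `J`, the two
conditions together say `l ≡ m - nK (mod N)`, and then `M = JK` makes the sample of `w` equal to
`w[-m + nK]`. So each column of `W(z)` has at most one nonzero coefficient at `z^(-n)`, and
multiplying by `F_N^*` evaluates a function on `ℤ/N` at the class of that row.
-/

lemma modEq_mul_iff_emod_eq_and_ediv_modEq {P : ℤ} (hP : P ≠ 0) (J a b : ℤ) :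
    a ≡ b [ZMOD P * J] ↔ a % P = b % P ∧ a / P ≡ b / P [ZMOD J] := by
  have hsub (h : a % P = b % P) : b - a = P * (b / P - a / P) := by
    linear_combination Int.emod_add_mul_ediv a P - Int.emod_add_mul_ediv b P - h
  have hquot (h : a % P = b % P) : a ≡ b [ZMOD P * J] ↔ a / P ≡ b / P [ZMOD J] := by
    rw [Int.modEq_iff_dvd, Int.modEq_iff_dvd, hsub h, mul_dvd_mul_iff_left hP]
  exact ⟨fun h ↦ have hmod := h.of_mul_right J; ⟨hmod, (hquot hmod).1 h⟩,
    fun h ↦ (hquot h.1).2 h.2⟩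

lemma modEq_sub_mul_iff_dvd_add {J L i j q : ℤ} (hJL : IsCoprime J L)
    (hq : i ≡ q * L + j [ZMOD J]) (n : ℤ) : i ≡ j - n * L [ZMOD J] ↔ J ∣ n + q := by
  calc i ≡ j - n * L [ZMOD J]
      ↔ q * L + j ≡ j - n * L [ZMOD J] := ⟨hq.symm.trans, hq.trans⟩
    _ ↔ J ∣ (n + q) * L := by
        rw [Int.modEq_iff_dvd, ← dvd_neg]
        ring_nf
    _ ↔ J ∣ n + q := ⟨hJL.dvd_of_dvd_mul_right, fun h ↦ h.mul_right L⟩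

lemma modEq_sub_mul_iff_emod_eq_and_dvd {P J L l m q : ℤ} (hP : P ≠ 0) (hJL : IsCoprime J L)
    (hq : l / P ≡ q * L + m / P [ZMOD J]) (n : ℤ) :
    l ≡ m - n * (P * L) [ZMOD P * J] ↔ l % P = m % P ∧ J ∣ n + q := by
  have hcol : m - n * (P * L) = m + P * -(n * L) := by ring
  rw [modEq_mul_iff_emod_eq_and_ediv_modEq hP, hcol, Int.add_mul_emod_self_left,
    Int.add_mul_ediv_left m _ hP, ← sub_eq_add_neg, modEq_sub_mul_iff_dvd_add hJL hq]

lemma lcm_eq_div_gcd_mul (a b : ℕ) : Nat.lcm a b = b / Nat.gcd b a * a := by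
  rw [Nat.lcm_comm, Nat.lcm, Nat.div_mul_right_comm (Nat.gcd_dvd_left b a)]

lemma sum_fin_eq_sum_zmod {A : Type*} [AddCommMonoid A] (N : ℕ) [NeZero N] (f : ZMod N → A) :
    ∑ l : Fin N, f ((l : ℕ) : ZMod N) = ∑ x, f x := by
  let residue : Fin N ≃ ZMod N :=
    { toFun := fun l ↦ (l : ℕ)
      invFun := fun x ↦ ⟨x.val, x.val_lt⟩
      left_inv := fun l ↦ Fin.ext (ZMod.val_natCast_of_lt l.isLt)
      right_inv := ZMod.natCast_zmod_val }
  exact residue.sum_comp f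

/-- The coefficient of `z^(-n)` in the `(l, m)` entry of the matrix `W(z)`. With `i = l / P`,
`j = m / P` and `r = m % P`, the index `p K + j P + r` of the polyphase component is `p K + m`,
and the coefficient of `z^(-n)` in `z^p W_{pK+m}(z^J)` is `w[-(pK + m) + ((n + p) / J) M]` when
`J` divides `n + p`, and zero otherwise. -/
def polyphaseCoeff {R : Type*} [Zero R] (P J K M : ℤ) (p : ℤ → ℤ → ℤ) (w : ℤ → R)
    (l m n : ℤ) : R :=
  if l % P = m % P then
    if J ∣ n + p (l / P) (m / P) then
      w (-(p (l / P) (m / P) * K + m) + (n + p (l / P) (m / P)) / J * M)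
    else 0
  else 0

lemma polyphaseCoeff_eq_ite_modEq {R : Type*} [Zero R] {P J L : ℤ} (hP : P ≠ 0)
    (hJL : IsCoprime J L) {p : ℤ → ℤ → ℤ} (hp : ∀ i j, i ≡ p i j * L + j [ZMOD J])
    (w : ℤ → R) (l m n : ℤ) :
    polyphaseCoeff P J (P * L) (J * (P * L)) p w l m n =
      if l ≡ m - n * (P * L) [ZMOD P * J] then w (-m + n * (P * L)) else 0 := by
  simp only [polyphaseCoeff, ← ite_and,
    modEq_sub_mul_iff_emod_eq_and_dvd hP hJL (hp (l / P) (m / P)) n]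
  refine if_ctx_congr Iff.rfl (fun h ↦ congrArg w ?_) fun _ ↦ rfl
  linear_combination (P * L) * Int.ediv_mul_cancel h.2

lemma sum_mul_polyphaseCoeff {R : Type*} [NonUnitalNonAssocSemiring R] {P J : ℕ} {L : ℤ}
    [NeZero (P * J)] (hJL : IsCoprime (J : ℤ) L) {p : ℤ → ℤ → ℤ}
    (hp : ∀ i j, i ≡ p i j * L + j [ZMOD J]) (w : ℤ → R) (f : ZMod (P * J) → R) (m n : ℤ) :
    ∑ l : Fin (P * J), f (l : ℕ) * polyphaseCoeff P J (P * L) (J * (P * L)) p w l m n =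
      f ((m - n * (P * L) : ℤ) : ZMod (P * J)) * w (-m + n * (P * L)) := by
  have hP : (P : ℤ) ≠ 0 := mod_cast left_ne_zero_of_mul (NeZero.ne (P * J))
  have hrow (l : Fin (P * J)) : polyphaseCoeff P J (P * L) (J * (P * L)) p w l m n =
      if ((l : ℕ) : ZMod (P * J)) = ((m - n * (P * L) : ℤ) : ZMod (P * J)) then
        w (-m + n * (P * L)) else 0 := by
    rw [polyphaseCoeff_eq_ite_modEq hP hJL hp, ← Nat.cast_mul P J]
    simp only [← ZMod.intCast_eq_intCast_iff, Int.cast_natCast]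
  simp only [hrow, mul_ite, mul_zero]
  rw [sum_fin_eq_sum_zmod (P * J) fun x ↦
    if x = ((m - n * (P * L) : ℤ) : ZMod (P * J)) then f x * w (-m + n * (P * L)) else 0]
  exact Fintype.sum_ite_eq' _ _

lemma stdAddChar_mul_intCast (N : ℕ) [NeZero N] (k : ℕ) (a : ℤ) :
    ZMod.stdAddChar ((k : ZMod N) * (a : ZMod N)) = exp (2 * Real.pi * I * k * a / N) := by
  rw [← Int.cast_natCast k, ← Int.cast_mul, ZMod.stdAddChar_coe]
  push_cast
  rw [mul_assoc _ (k : ℂ)]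

lemma stdAddChar_mul_neg_natCast (N : ℕ) [NeZero N] (k l : ℕ) :
    ZMod.stdAddChar ((k : ZMod N) * -(l : ZMod N)) =
      exp (-(2 * Real.pi * I) * l * k / N) := by
  rw [← Int.cast_natCast l, ← Int.cast_neg, stdAddChar_mul_intCast]
  push_cast
  ring_nf

-- Row `k` of `F_N^*` is the case `e x = exp(2πi k x / N)`.
theorem stmt18_general {R : Type*} [NonUnitalNonAssocSemiring R] (N K P J L M : ℕ) [NeZero N]
    (hP : P = Nat.gcd N K) (hJ : J = N / P) (hL : L = K / P) (hM : M = Nat.lcm K N)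
    (w : ℤ → R) (p : ℤ → ℤ → ℤ) (hp : ∀ i j : ℤ, i ≡ p i j * (L : ℤ) + j [ZMOD (J : ℤ)])
    (e : ZMod N → R) (m n : ℤ) :
    e ((-m + n * K : ℤ) : ZMod N) * w (-m + n * K) =
      ∑ l : Fin N, e (-((l : ℕ) : ZMod N)) * polyphaseCoeff P J K M p w l m n := by
  have hN : N = P * J := by rw [hJ, Nat.mul_div_cancel' (hP ▸ Nat.gcd_dvd_left N K)]
  have hK : K = P * L := by rw [hL, Nat.mul_div_cancel' (hP ▸ Nat.gcd_dvd_right N K)]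
  have hMJK : M = J * K := by rw [hM, hJ, hP, lcm_eq_div_gcd_mul]
  have hJL : IsCoprime (J : ℤ) L := by
    rw [Nat.isCoprime_iff_coprime, hJ, hL, hP]
    exact Nat.coprime_div_gcd_div_gcd (Nat.gcd_pos_of_pos_left K (NeZero.pos N))
  clear hP hJ hL hM
  subst hMJK hK hN
  have hsum := sum_mul_polyphaseCoeff hJL hp w (fun x ↦ e (-x)) m n
  push_cast at hsum ⊢
  rw [hsum, neg_sub, sub_eq_neg_add]

/-- Polyphase representation of the OFDM demultiplexer:
`D(z) = F_N^* · W(z)`, stated coefficientwise.  A Laurent polynomial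
`∑ c n · z^(-n)` is represented by its coefficient function `n ↦ c n`.
The `(k,m)` entry of the demultiplexer polyphase matrix `D(z)` has coefficient
`w(−m+nK)·exp(2πi k(−m+nK)/N)` at `z^(-n)`; `F_N^*` is the conjugate transpose
of the `N`-point DFT matrix `[F_N]_{m,k} = exp(2πi mk/N)`, and the `N×K` matrix
`W(z)` has entry `z^p·W_{pK+jP+r}(z^J)` at position `(iP+r, jP+r)` (where `p` is
the unique integer in `{0,…,J−1}` with `i ≡ pL + j (mod J)`, and
`W_j(z) = ∑_n w[−j+nM]·z^(−n)`), with zero entries at positions `(l,m)` with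
`l ≢ m (mod P)`. -/
theorem stmt18
    (N K P J L M : ℕ) (hN : 0 < N) (hNK : N ≤ K)
    (hP : P = Nat.gcd N K) (hJ : J = N / P) (hL : L = K / P) (hM : M = Nat.lcm K N)
    (w : ℤ → ℂ) (hw : (Function.support w).Finite)
    (p : ℤ → ℤ → ℤ)
    (hp : ∀ i j : ℤ, 0 ≤ p i j ∧ p i j < (J : ℤ) ∧ i ≡ p i j * (L : ℤ) + j [ZMOD (J : ℤ)]) :
    ∀ (k : Fin N) (m : Fin K) (n : ℤ),
      -- coefficient of `z^(-n)` in `[D(z)]_{k,m}`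
      w (-(m : ℤ) + n * K) *
          Complex.exp (2 * Real.pi * Complex.I * ((k : ℕ) : ℂ) * ((-(m : ℤ) + n * K : ℤ) : ℂ) / N)
        =
      -- coefficient of `z^(-n)` in `[F_N^* · W(z)]_{k,m}`
      ∑ l : Fin N,
        Complex.exp (-(2 * Real.pi * Complex.I) * ((l : ℕ) : ℂ) * ((k : ℕ) : ℂ) / N) *
          (if ((l : ℤ) % P = (m : ℤ) % P) then
              (if (J : ℤ) ∣ (n + p ((l : ℤ) / P) ((m : ℤ) / P)) then
                w (-(p ((l : ℤ) / P) ((m : ℤ) / P) * K + (m : ℤ))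
                    + ((n + p ((l : ℤ) / P) ((m : ℤ) / P)) / J) * M)
              else 0)
            else 0) := by
  intro k m n
  have : NeZero N := ⟨hN.ne'⟩
  simpa only [stdAddChar_mul_intCast, stdAddChar_mul_neg_natCast, polyphaseCoeff, mul_comm (w _)]
    using stmt18_general N K P J L M hP hJ hL hM w p (fun i j ↦ (hp i j).2.2)
      (fun x ↦ ZMod.stdAddChar (((k : ℕ) : ZMod N) * x)) m n
end
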